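/- arXiv:0804.3032 — 2 statements merged into one kernel-verified Lean document; each statement's English description precedes it below -/
import Mathlib

section
/- Let β > 0. There exists a constant K > 0 depending only on β such that for every possible forest S with vertices v_{s_1},…,v_{s_k} (s_1 < … < s_k) and every integer t ≥ s_k, the probability under the Móri measure (on parent sequences of length t) that S is a subgraph of G^t_{1,β} equals β/(d^in_S(v_1)+β) · ∏_{v_i ∈ V^−(S)} Γ(1+d^in_S(v_i)+β)/Γ(1+β) · ∏_{(v_i,v_j) ∈ E(S), i>j} 1/((2+β)(i^{1+β} j)^{1/(2+β)}) · e^θ for some real θ with |θ| ≤ K · Σ_{j=2}^{k} c_S(s_j)²/(j−1). -/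
open Finset

/-- A parent sequence of length `N`: for each `t ∈ {2,…,N}` an index `f t ∈ {1,…,t-1}`. -/
def ParentSeq (N : ℕ) : Type :=
  ∀ t : Set.Icc 2 N, Set.Icc 1 ((t : ℕ) - 1)

noncomputable instance (N : ℕ) : Fintype (ParentSeq N) := by
  unfold ParentSeq
  classical
  infer_instance

/-- The value of a parent sequence at `j` (junk value `0` outside `{2,…,N}`). -/
def pval {N : ℕ} (f : ParentSeq N) (j : ℕ) : ℕ :=
  if h : 2 ≤ j ∧ j ≤ N then (f ⟨j, Set.mem_Icc.mpr h⟩ : ℕ) else 0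

/-- The degree `d_t(v_i)` of vertex `i` at time `t` in the tree determined by `f`. -/
def deg {N : ℕ} (f : ParentSeq N) (t i : ℕ) : ℕ :=
  ((Finset.Icc 2 t).filter (fun j => pval f j = i)).card + (if 2 ≤ i then 1 else 0)

/-- The Móri probability of the parent sequence `f`. -/
noncomputable def moriP {N : ℕ} (β : ℝ) (f : ParentSeq N) : ℝ :=
  ∏ t ∈ Finset.Icc 2 N, ((deg f (t - 1) (pval f t) : ℝ) + β) / ((2 + β) * ((t : ℝ) - 1) - 2)

/-- Expectation of `X` under the Móri measure on parent sequences of length `N`. -/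
noncomputable def moriE (N : ℕ) (β : ℝ) (X : ParentSeq N → ℝ) : ℝ :=
  ∑ f : ParentSeq N, moriP β f * X f

open Classical in
/-- Probability of an event under the Móri measure on parent sequences of length `N`. -/
noncomputable def moriPr (N : ℕ) (β : ℝ) (p : ParentSeq N → Prop) : ℝ :=
  ∑ f : ParentSeq N, if p f then moriP β f else 0

/-- The index of the merged vertex containing tree vertex `t` when merging in blocks of `m`. -/
def blk (m t : ℕ) : ℕ := (t - 1) / m + 1

/-- The number `m(a,b)` of edges joining `u_a` and `u_b` in the Móri graph `G^n_{m,β}`. -/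
def mult (n m : ℕ) (f : ParentSeq (n * m)) (a b : ℕ) : ℕ :=
  ((Finset.Icc 2 (n * m)).filter (fun t =>
    (blk m t = a ∧ blk m (pval f t) = b) ∨ (blk m t = b ∧ blk m (pval f t) = a))).card

/-- The degree `d(u_i)` of the merged vertex `u_i` in the Móri graph `G^n_{m,β}`
(a loop contributes `2`). -/
def degU (n m : ℕ) (f : ParentSeq (n * m)) (i : ℕ) : ℕ :=
  ((Finset.Icc 2 (n * m)).filter (fun t => blk m t = i)).card +
  ((Finset.Icc 2 (n * m)).filter (fun t => blk m (pval f t) = i)).card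
/-- A possible forest: a finite set of directed edges `(i, j)` with `1 ≤ j < i`,
each vertex having out-degree at most one (so vertex `1` has out-degree zero, and
there are no isolated vertices since the vertex set consists of endpoints of edges). -/
structure PossibleForest where
  E : Finset (ℕ × ℕ)
  one_le : ∀ e ∈ E, 1 ≤ e.2
  snd_lt_fst : ∀ e ∈ E, e.2 < e.1
  outdeg_le_one : ∀ e ∈ E, ∀ e' ∈ E, e.1 = e'.1 → e = e'

/-- The vertex set of a possible forest. -/
def PossibleForest.V (S : PossibleForest) : Finset ℕ :=
  S.E.image Prod.fst ∪ S.E.image Prod.snd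

/-- The in-degree `d^in_S(v_i)` of vertex `i` in `S` (zero if `i` is not a vertex of `S`). -/
def PossibleForest.din (S : PossibleForest) (i : ℕ) : ℕ :=
  (S.E.filter (fun e => e.2 = i)).card

/-- `V^-(S)`: the vertices of `S` with positive in-degree. -/
def PossibleForest.Vminus (S : PossibleForest) : Finset ℕ := S.E.image Prod.snd

/-- `V^+(S)`: the vertices of `S` with out-degree one. -/
def PossibleForest.Vplus (S : PossibleForest) : Finset ℕ := S.E.image Prod.fst

/-- `c_S(i)`: the number of edges `(v_a, v_b)` of `S` with `a ≥ i > b`. -/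
def PossibleForest.cS (S : PossibleForest) (i : ℕ) : ℕ :=
  (S.E.filter (fun e => i ≤ e.1 ∧ e.2 < i)).card

open Classical in
/-- The probability, under the Móri measure on parent sequences of length `t`,
that the possible forest `S` is a subgraph of `G^t_{1,β}`. -/
noncomputable def subProb (β : ℝ) (t : ℕ) (S : PossibleForest) : ℝ :=
  ∑ f : ParentSeq t, if ∀ e ∈ S.E, pval f e.1 = e.2 then moriP β f else 0


section helpers

theorem pval_out {n : ℕ} (f : ParentSeq n) (j : ℕ) (h : ¬ (2 ≤ j ∧ j ≤ n)) : pval f j = 0 := by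
  simp [pval, h]

theorem pval_mem {n : ℕ} (f : ParentSeq n) (j : ℕ) (h : 2 ≤ j ∧ j ≤ n) :
    1 ≤ pval f j ∧ pval f j ≤ j - 1 := by
  have := (f ⟨j, Set.mem_Icc.mpr h⟩).2
  simp only [pval, h, and_self, dif_pos]
  exact this

theorem pval_inj {n : ℕ} (f f' : ParentSeq n) (h : pval f = pval f') : f = f' := by
  funext t
  apply Subtype.ext
  have h1 := congrFun h t
  have ht : 2 ≤ (t : ℕ) ∧ (t : ℕ) ≤ n := t.2
  simpa [pval, ht] using h1

def extP {n : ℕ} (f : ParentSeq n) (i : Set.Icc 1 n) : ParentSeq (n + 1) := fun t =>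
  if h : (t : ℕ) ≤ n then f ⟨t, ⟨t.2.1, h⟩⟩
  else ⟨i, ⟨i.2.1, by
    have h1 := i.2.2
    have h2 := t.2.2
    omega⟩⟩

theorem pval_extP {n : ℕ} (hn : 1 ≤ n) (f : ParentSeq n) (i : Set.Icc 1 n) :
    pval (extP f i) = Function.update (pval f) (n + 1) (i : ℕ) := by
  funext j
  by_cases hj : j = n + 1
  · subst hj
    simp [pval, extP, hn]
  · rw [Function.update_of_ne hj]
    by_cases h : 2 ≤ j ∧ j ≤ n
    · have h' : 2 ≤ j ∧ j ≤ n + 1 := ⟨h.1, by omega⟩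
      simp [pval, extP, h, h']
    · rw [pval_out _ _ h, pval_out]
      omega

theorem extP_bij {n : ℕ} (hn : 1 ≤ n) :
    Function.Bijective (fun p : ParentSeq n × Set.Icc 1 n => extP p.1 p.2) := by
  constructor
  · rintro ⟨f, i⟩ ⟨f', i'⟩ h
    have h1 : pval (extP f i) = pval (extP f' i') := by
      simp only at h
      rw [h]
    rw [pval_extP hn, pval_extP hn] at h1
    have h2 := congrFun h1 (n + 1)
    simp only [Function.update_self] at h2
    have h3 : f = f' := by
      apply pval_inj
      funext j
      by_cases hj : j = n + 1
      · rw [pval_out _ _ (by omega), pval_out _ _ (by omega)]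
      · have := congrFun h1 j
        rwa [Function.update_of_ne hj, Function.update_of_ne hj] at this
    rw [h3, Subtype.ext h2]
  · intro f
    refine ⟨(fun t => f ⟨t, ⟨t.2.1, le_trans t.2.2 (Nat.le_succ n)⟩⟩,
      ⟨f ⟨n + 1, ⟨by omega, le_refl _⟩⟩, (f ⟨n + 1, ⟨by omega, le_refl _⟩⟩).2⟩), ?_⟩
    apply pval_inj
    rw [pval_extP hn]
    funext j
    by_cases hj : j = n + 1
    · subst hj
      simp [pval, hn]
    · rw [Function.update_of_ne hj]
      by_cases h : 2 ≤ j ∧ j ≤ n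
      · have h' : 2 ≤ j ∧ j ≤ n + 1 := ⟨h.1, by omega⟩
        simp [pval, h, h']
      · rw [pval_out _ _ h, pval_out]
        omega

theorem sum_step {n : ℕ} (hn : 1 ≤ n) (F : (ℕ → ℕ) → ℝ) :
    ∑ f : ParentSeq (n + 1), F (pval f) =
      ∑ f : ParentSeq n, ∑ i ∈ Finset.Icc 1 n, F (Function.update (pval f) (n + 1) i) := by
  rw [← Fintype.sum_bijective _ (extP_bij hn)
    (fun p => F (Function.update (pval p.1) (n + 1) (p.2 : ℕ))) _
    (fun p => by rw [pval_extP hn]), Fintype.sum_prod_type]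
  refine Finset.sum_congr rfl fun f _ => ?_
  symm
  apply Finset.sum_subtype
  simp

theorem sum_base {n : ℕ} (hn : n ≤ 1) (F : (ℕ → ℕ) → ℝ) :
    ∑ f : ParentSeq n, F (pval f) = F (fun _ => 0) := by
  have hp : ∀ f : ParentSeq n, pval f = fun _ => 0 := by
    intro f
    funext j
    exact pval_out _ _ (by omega)
  have : Subsingleton (ParentSeq n) := ⟨fun f f' => pval_inj _ _ (by rw [hp, hp])⟩
  let f0 : ParentSeq n := fun t => absurd t.2 (by
    rintro ⟨h1, h2⟩
    omega)
  rw [Fintype.sum_subsingleton _ f0, hp]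

def dg (g : ℕ → ℕ) (t i : ℕ) : ℕ :=
  ((Finset.Icc 2 t).filter (fun j => g j = i)).card + (if 2 ≤ i then 1 else 0)

noncomputable def asc (x : ℝ) (r : ℕ) : ℝ := ∏ k ∈ Finset.range r, (x + k)

theorem asc_succ' (x : ℝ) (r : ℕ) : asc x (r + 1) = x * asc (x + 1) r := by
  unfold asc
  rw [Finset.prod_range_succ', mul_comm]
  simp only [Nat.cast_zero, add_zero]
  congr 1
  refine Finset.prod_congr rfl fun k _ => ?_
  push_cast
  ring

theorem asc_shift (x : ℝ) (r : ℕ) : x * asc (x + 1) r = asc x r * (x + r) := by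
  rw [← asc_succ', asc, Finset.prod_range_succ]
  rfl

theorem asc_gamma (x : ℝ) (hx : 0 < x) (r : ℕ) :
    asc x r = Real.Gamma (x + r) / Real.Gamma x := by
  induction r with
  | zero => simp [asc, (Real.Gamma_pos_of_pos hx).ne']
  | succ r ih =>
    rw [asc, Finset.prod_range_succ]
    change asc x r * _ = _
    have : (x + r : ℝ) ≠ 0 := by positivity
    rw [ih]
    push_cast
    rw [← add_assoc, Real.Gamma_add_one this]
    ring

namespace PossibleForest

def rem (S : PossibleForest) (n i : ℕ) : ℕ :=
  (S.E.filter (fun e => e.2 = i ∧ n < e.1)).card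

theorem sum_rem (S : PossibleForest) (n : ℕ) :
    ∑ i ∈ Finset.Icc 1 n, S.rem n i = S.cS (n + 1) := by
  unfold cS rem
  rw [Finset.card_eq_sum_card_fiberwise (f := Prod.snd) (t := Finset.Icc 1 n)]
  · refine Finset.sum_congr rfl fun i hi => ?_
    rw [Finset.filter_filter]
    congr 1
    ext e
    simp only [Finset.mem_filter, Finset.mem_Icc] at *
    grind
  · intro e he
    simp only [Finset.coe_filter, Set.mem_ofPred_eq, Finset.coe_Icc, Set.mem_Icc] at *
    have := S.one_le e he.1
    omega

theorem rem_self (S : PossibleForest) (n : ℕ) : S.rem n n = S.din n := by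
  unfold rem din
  congr 1
  ext e
  simp only [Finset.mem_filter]
  constructor
  · tauto
  · rintro ⟨h, h'⟩
    have := S.snd_lt_fst e h
    exact ⟨h, h', by omega⟩

theorem rem_succ_notMem (S : PossibleForest) (n i : ℕ) (h : n + 1 ∉ S.Vplus) :
    S.rem (n + 1) i = S.rem n i := by
  unfold rem
  congr 1
  ext e
  simp only [Finset.mem_filter]
  constructor
  · rintro ⟨a, b, c⟩
    exact ⟨a, b, by omega⟩
  · rintro ⟨a, b, c⟩
    refine ⟨a, b, ?_⟩
    by_contra hc
    apply h
    have : e.1 = n + 1 := by omega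
    rw [← this]
    exact Finset.mem_image_of_mem _ a

theorem rem_succ_mem (S : PossibleForest) (n i j : ℕ) (h : (n + 1, j) ∈ S.E) :
    S.rem n i = S.rem (n + 1) i + if i = j then 1 else 0 := by
  unfold rem
  have key : ∀ e ∈ S.E, e.1 = n + 1 → e = (n + 1, j) := fun e he h1 =>
    S.outdeg_le_one e he _ h h1
  split_ifs with hij
  · subst hij
    rw [← Finset.card_insert_of_notMem (a := (n + 1, i))]
    · congr 1
      ext e
      simp only [Finset.mem_filter, Finset.mem_insert]
      constructor
      · rintro ⟨a, b, c⟩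
        by_cases h1 : e.1 = n + 1
        · left
          exact key e a h1
        · right
          exact ⟨a, b, by omega⟩
      · rintro (rfl | ⟨a, b, c⟩)
        · exact ⟨h, rfl, by simp⟩
        · exact ⟨a, b, by omega⟩
    · simp
  · rw [add_zero]
    congr 1
    ext e
    simp only [Finset.mem_filter]
    constructor
    · rintro ⟨a, b, c⟩
      refine ⟨a, b, ?_⟩
      by_contra hc
      have := key e a (by omega)
      rw [this] at b
      exact hij b.symm
    · rintro ⟨a, b, c⟩
      exact ⟨a, b, by omega⟩

end PossibleForest

theorem dg_update_le (g : ℕ → ℕ) (n i k : ℕ) (hn : 1 ≤ n) :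
    (dg (Function.update g (n + 1) i) (n + 1) k) = dg g n k + if k = i then 1 else 0 := by
  unfold dg
  have hI : Finset.Icc 2 (n + 1) = insert (n + 1) (Finset.Icc 2 n) := by
    ext x
    simp only [Finset.mem_Icc, Finset.mem_insert]
    omega
  have hc : ((Finset.Icc 2 n).filter (fun j => Function.update g (n + 1) i j = k))
      = ((Finset.Icc 2 n).filter (fun j => g j = k)) := by
    apply Finset.filter_congr
    intro x hx
    rw [Function.update_of_ne]
    simp at hx
    omega
  rw [hI, Finset.filter_insert, Function.update_self, hc]
  by_cases h : i = k
  · rw [if_pos h, if_pos h.symm, Finset.card_insert_of_notMem (by simp)]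
    omega
  · rw [if_neg h, if_neg (Ne.symm h)]
    omega

theorem dg_update_lt (g : ℕ → ℕ) (n i t k : ℕ) (ht : t ≤ n) :
    (dg (Function.update g (n + 1) i) t k) = dg g t k := by
  unfold dg
  congr 2
  apply Finset.filter_congr
  intro x hx
  rw [Function.update_of_ne]
  simp at hx
  omega

theorem dg_new (g : ℕ → ℕ) (n : ℕ) (hn : 1 ≤ n) (hg : ∀ j, 2 ≤ j → j ≤ n → g j ≤ j - 1) :
    dg g n (n + 1) = 1 := by
  unfold dg
  rw [if_pos (by omega), Finset.filter_false_of_mem]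
  · simp
  · intro x hx
    simp at hx
    have := hg x hx.1 hx.2
    omega

theorem sum_dg (g : ℕ → ℕ) (n : ℕ) (hn : 1 ≤ n)
    (hg : ∀ j, 2 ≤ j → j ≤ n → 1 ≤ g j ∧ g j ≤ j - 1) :
    ∑ i ∈ Finset.Icc 1 n, dg g n i = 2 * (n - 1) := by
  unfold dg
  rw [Finset.sum_add_distrib, ← Finset.card_eq_sum_card_fiberwise, ← Finset.sum_filter]
  · have : (Finset.Icc 1 n).filter (fun i => 2 ≤ i) = Finset.Icc 2 n := by
      ext x
      simp only [Finset.mem_filter, Finset.mem_Icc]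
      omega
    rw [this]
    simp
    omega
  · intro x hx
    simp at hx
    have := hg x hx.1 hx.2
    simp
    omega

open Classical in
noncomputable def WW (S : PossibleForest) (β : ℝ) (n : ℕ) (g : ℕ → ℕ) : ℝ :=
  if ∀ e ∈ S.E, e.1 ≤ n → g e.1 = e.2 then
    (∏ t ∈ Finset.Icc 2 n, ((dg g (t - 1) (g t) : ℝ) + β) / ((2 + β) * ((t : ℝ) - 1) - 2)) *
      ∏ k ∈ Finset.Icc 1 n, asc (dg g n k + β) (S.rem n k)
  else 0

noncomputable def fac (S : PossibleForest) (β : ℝ) (a : ℕ) : ℝ :=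
  if a ∈ S.Vplus then 1 / ((2 + β) * ((a : ℝ) - 1) - 2)
  else 1 + S.cS a / ((2 + β) * ((a : ℝ) - 1) - 2)

theorem Icc_two_succ (n : ℕ) (hn : 1 ≤ n) :
    Finset.Icc 2 (n + 1) = insert (n + 1) (Finset.Icc 2 n) := by
  ext x
  simp only [Finset.mem_Icc, Finset.mem_insert]
  omega

theorem Icc_one_succ (n : ℕ) :
    Finset.Icc 1 (n + 1) = insert (n + 1) (Finset.Icc 1 n) := by
  ext x
  simp only [Finset.mem_Icc, Finset.mem_insert]
  omega

theorem ZZ_pos (β : ℝ) (hβ : 0 < β) (a : ℕ) (ha : 2 ≤ a) :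
    β * ((a : ℝ) - 1) ≤ (2 + β) * ((a : ℝ) - 1) - 2 ∧ 0 < (2 + β) * ((a : ℝ) - 1) - 2 := by
  have : (2 : ℝ) ≤ a := by exact_mod_cast ha
  constructor
  · nlinarith
  · nlinarith

theorem WW_update (S : PossibleForest) (β : ℝ) (n : ℕ) (hn : 1 ≤ n) (g : ℕ → ℕ)
    (hg : ∀ j, 2 ≤ j → j ≤ n → 1 ≤ g j ∧ g j ≤ j - 1) (i : ℕ) (hi : i ∈ Finset.Icc 1 n) 
    (hc : ∀ e ∈ S.E, e.1 ≤ n → g e.1 = e.2) (hc' : ∀ e ∈ S.E, e.1 = n + 1 → i = e.2) :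
    WW S β (n + 1) (Function.update g (n + 1) i) =
    (∏ t ∈ Finset.Icc 2 n, ((dg g (t - 1) (g t) : ℝ) + β) / ((2 + β) * ((t : ℝ) - 1) - 2)) *
      (((dg g n i : ℝ) + β) / ((2 + β) * (((n + 1 : ℕ) : ℝ) - 1) - 2)) *
      (asc (1 + β) (S.din (n + 1)) *
      ∏ k ∈ Finset.Icc 1 n, asc (dg g n k + (if k = i then 1 else 0) + β) (S.rem (n + 1) k)) := by
  unfold WW
  simp only [Finset.mem_Icc] at hi
  rw [if_pos]
  · congr 1
    · rw [Icc_two_succ n hn, Finset.prod_insert (by simp), mul_comm]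
      congr 1
      · refine Finset.prod_congr rfl fun t ht => ?_
        simp only [Finset.mem_Icc] at ht
        rw [Function.update_of_ne (by omega), dg_update_lt _ _ _ _ _ (by omega)]
      · rw [Function.update_self, dg_update_lt _ _ _ _ _ (by omega)]
        simp
    · rw [Icc_one_succ n, Finset.prod_insert (by simp)]
      congr 1
      · rw [dg_update_le _ _ _ _ hn, dg_new g n hn (fun j h1 h2 => (hg j h1 h2).2),
          if_neg (by omega), S.rem_self]
        simp
      · refine Finset.prod_congr rfl fun t ht => ?_
        rw [dg_update_le _ _ _ _ hn]
        push_cast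
        rfl
  · intro e he h1
    by_cases h2 : e.1 = n + 1
    · rw [h2, Function.update_self]
      exact hc' e he h2
    · rw [Function.update_of_ne h2]
      exact hc e he (by omega)

theorem WW_update_zero (S : PossibleForest) (β : ℝ) (n : ℕ) (g : ℕ → ℕ) (i : ℕ)
    (hc : ¬ ((∀ e ∈ S.E, e.1 ≤ n → g e.1 = e.2) ∧ (∀ e ∈ S.E, e.1 = n + 1 → i = e.2))) :
    WW S β (n + 1) (Function.update g (n + 1) i) = 0 := by
  unfold WW
  rw [if_neg]
  intro h
  apply hc
  constructor
  · intro e he h1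
    have := h e he (by omega)
    rwa [Function.update_of_ne (by omega)] at this
  · intro e he h1
    have := h e he (by omega)
    rwa [h1, Function.update_self] at this

theorem WW_step (S : PossibleForest) (β : ℝ) (hβ : 0 < β) (n : ℕ) (hn : 1 ≤ n) (g : ℕ → ℕ)
    (hg : ∀ j, 2 ≤ j → j ≤ n → 1 ≤ g j ∧ g j ≤ j - 1) :
    ∑ i ∈ Finset.Icc 1 n, WW S β (n + 1) (Function.update g (n + 1) i) =
      WW S β n g * (asc (1 + β) (S.din (n + 1)) * fac S β (n + 1)) := by
  by_cases hc : ∀ e ∈ S.E, e.1 ≤ n → g e.1 = e.2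
  swap
  · rw [Finset.sum_eq_zero, WW, if_neg hc, zero_mul]
    intro i _
    apply WW_update_zero
    tauto
  obtain ⟨-, hZ⟩ := ZZ_pos β hβ (n + 1) (by omega)
  by_cases hV : n + 1 ∈ S.Vplus
  · obtain ⟨e, he, he1⟩ := Finset.mem_image.mp hV
    obtain ⟨a, j⟩ := e
    simp only at he1
    subst he1
    have hj : j ∈ Finset.Icc 1 n := by
      have h1 := S.one_le _ he
      have h2 := S.snd_lt_fst _ he
      simp only [Finset.mem_Icc] at *
      omega
    rw [Finset.sum_eq_single_of_mem j hj]
    · rw [WW_update S β n hn g hg j hj hc]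
      · rw [WW, if_pos hc, fac, if_pos hV, ← Finset.mul_prod_erase _ _ hj,
          ← Finset.mul_prod_erase _ _ hj]
        have h1 : ∏ k ∈ (Finset.Icc 1 n).erase j,
            asc (dg g n k + (if k = j then 1 else 0) + β) (S.rem (n + 1) k) =
            ∏ k ∈ (Finset.Icc 1 n).erase j, asc (dg g n k + β) (S.rem n k) := by
          refine Finset.prod_congr rfl fun k hk => ?_
          have hk' := Finset.ne_of_mem_erase hk
          rw [S.rem_succ_mem n k j he, if_neg hk', if_neg hk', add_zero, add_zero]
        rw [h1, S.rem_succ_mem n j j he, if_pos rfl, if_pos rfl, asc_succ',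
          add_right_comm (dg g n j : ℝ) 1 β]
        ring
      · intro e' he' h1
        rw [S.outdeg_le_one e' he' _ he h1]
    · intro i hi hij
      apply WW_update_zero
      rintro ⟨-, h⟩
      exact hij (h _ he rfl)
  · have hno : ∀ e ∈ S.E, e.1 = n + 1 → False := fun e he h1 =>
      hV (h1 ▸ Finset.mem_image_of_mem _ he)
    have h1 : ∀ i ∈ Finset.Icc 1 n, WW S β (n + 1) (Function.update g (n + 1) i) =
        WW S β n g * asc (1 + β) (S.din (n + 1)) *
          (((dg g n i : ℝ) + β + S.rem n i) / ((2 + β) * (((n + 1 : ℕ) : ℝ) - 1) - 2)) := by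
      intro i hi
      rw [WW_update S β n hn g hg i hi hc (fun e he h => (hno e he h).elim), WW, if_pos hc,
        ← Finset.mul_prod_erase _ _ hi, ← Finset.mul_prod_erase _ _ hi]
      have h1 : ∏ k ∈ (Finset.Icc 1 n).erase i,
            asc (dg g n k + (if k = i then 1 else 0) + β) (S.rem (n + 1) k) =
            ∏ k ∈ (Finset.Icc 1 n).erase i, asc (dg g n k + β) (S.rem n k) := by
        refine Finset.prod_congr rfl fun k hk => ?_
        rw [S.rem_succ_notMem n k hV, if_neg (Finset.ne_of_mem_erase hk), add_zero]
      rw [h1, S.rem_succ_notMem n i hV, if_pos rfl, add_right_comm (dg g n i : ℝ) 1 β]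
      have := asc_shift (dg g n i + β) (S.rem n i)
      linear_combination ((∏ t ∈ Finset.Icc 2 n, ((dg g (t - 1) (g t) : ℝ) + β) / ((2 + β) * ((t : ℝ) - 1) - 2)) * (1 / ((2 + β) * (((n + 1 : ℕ) : ℝ) - 1) - 2)) *
        asc (1 + β) (S.din (n + 1)) * ∏ k ∈ (Finset.Icc 1 n).erase i, asc (dg g n k + β) (S.rem n k)) * this
    rw [Finset.sum_congr rfl h1, ← Finset.mul_sum, ← Finset.sum_div, fac, if_neg hV,
      Finset.sum_add_distrib, Finset.sum_add_distrib]
    have h2 : ∑ i ∈ Finset.Icc 1 n, (dg g n i : ℝ) = 2 * ((n : ℝ) - 1) := by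
      have := sum_dg g n hn hg
      rw [← Nat.cast_sum, this]
      push_cast [hn]
      ring
    have h3 : ∑ i ∈ Finset.Icc 1 n, (S.rem n i : ℝ) = S.cS (n + 1) := by
      rw [← Nat.cast_sum, S.sum_rem n]
    rw [h2, h3]
    simp only [Finset.sum_const, Nat.card_Icc, nsmul_eq_mul]
    rw [mul_assoc]
    congr 2
    rw [one_add_div hZ.ne']
    congr 1
    push_cast
    simp only [add_tsub_cancel_right]
    ring

theorem sum_WW (S : PossibleForest) (β : ℝ) (hβ : 0 < β) (n : ℕ) (hn : 1 ≤ n) :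
    ∑ f : ParentSeq n, WW S β n (pval f) =
      asc β (S.din 1) * ∏ a ∈ Finset.Icc 2 n, (asc (1 + β) (S.din a) * fac S β a) := by
  induction n, hn using Nat.le_induction with
  | base =>
    rw [sum_base le_rfl (WW S β 1), WW, if_pos]
    · simp [dg, S.rem_self]
    · intro e he h1
      have h1 := S.one_le _ he
      have h2 := S.snd_lt_fst _ he
      omega
  | succ n hn ih =>
    rw [sum_step hn (WW S β (n + 1)), Finset.sum_congr rfl
      (fun f _ => WW_step S β hβ n hn (pval f) (fun j h1 h2 => pval_mem f j ⟨h1, h2⟩)),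
      ← Finset.sum_mul, ih, Icc_two_succ n hn, Finset.prod_insert (by simp)]
    ring

theorem subProb_eq (S : PossibleForest) (β : ℝ) (hβ : 0 < β) (n : ℕ) 
    (hS : ∀ i ∈ S.V, i ≤ n) :
    subProb β n S =
      asc β (S.din 1) * ∏ a ∈ Finset.Icc 2 n, (asc (1 + β) (S.din a) * fac S β a) := by
  have hE : ∀ e ∈ S.E, e.1 ≤ n := fun e he =>
    hS _ (Finset.mem_union_left _ (Finset.mem_image_of_mem _ he))
  have h1 : subProb β n S = ∑ f : ParentSeq n, WW S β n (pval f) := by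
    unfold subProb WW
    refine Finset.sum_congr rfl fun f _ => ?_
    have hr : ∀ k, S.rem n k = 0 := by
      intro k
      unfold PossibleForest.rem
      rw [Finset.card_eq_zero, Finset.filter_false_of_mem]
      intro e he h
      have := hE e he
      omega
    have : (∀ e ∈ S.E, pval f e.1 = e.2) ↔ (∀ e ∈ S.E, e.1 ≤ n → pval f e.1 = e.2) :=
      ⟨fun h e he _ => h e he, fun h e he => h e he (hE e he)⟩
    simp only [this, hr]
    simp [asc, moriP, dg, deg]
  rw [h1]
  rcases Nat.eq_zero_or_pos n with rfl | hn
  · rw [sum_base (by omega) (WW S β 0)]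
    have hem : S.E = ∅ := by
      rw [Finset.eq_empty_iff_forall_notMem]
      intro e he
      have := hE e he
      have := S.snd_lt_fst e he
      omega
    simp [WW, hem, PossibleForest.din, asc]
  · exact sum_WW S β hβ n hn

theorem gamma_part (S : PossibleForest) (β : ℝ) (hβ : 0 < β) (n : ℕ)
    (hS : ∀ i ∈ S.V, i ≤ n) :
    asc β (S.din 1) * ∏ a ∈ Finset.Icc 2 n, asc (1 + β) (S.din a) =
      β / ((S.din 1 : ℝ) + β)
            * (∏ i ∈ S.Vminus, Real.Gamma (1 + (S.din i : ℝ) + β) / Real.Gamma (1 + β)) := by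
  have h0 : ∀ i, i ∉ S.Vminus → S.din i = 0 := by
    intro i hi
    unfold PossibleForest.din
    rw [Finset.card_eq_zero, Finset.filter_false_of_mem]
    rintro e he rfl
    exact hi (Finset.mem_image_of_mem _ he)
  have h1 : ∏ i ∈ S.Vminus, Real.Gamma (1 + (S.din i : ℝ) + β) / Real.Gamma (1 + β) =
      ∏ i ∈ S.Vminus, asc (1 + β) (S.din i) := by
    refine Finset.prod_congr rfl fun i _ => ?_
    rw [asc_gamma _ (by positivity)]
    congr 2
    ring
  have h2 : ∏ i ∈ S.Vminus, asc (1 + β) (S.din i) =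
      ∏ i ∈ insert 1 (Finset.Icc 2 n), asc (1 + β) (S.din i) := by
    apply Finset.prod_subset
    · intro i hi
      obtain ⟨e, he, rfl⟩ := Finset.mem_image.mp hi
      have := hS _ (Finset.mem_union_right _ hi)
      have := S.one_le e he
      simp only [Finset.mem_insert, Finset.mem_Icc]
      omega
    · intro i _ hi
      rw [h0 i hi]
      simp [asc]
  rw [h1, h2, Finset.prod_insert (by simp), ← mul_assoc]
  congr 1
  have := asc_shift β (S.din 1)
  rw [add_comm 1 β]
  have hp : (S.din 1 : ℝ) + β ≠ 0 := by positivity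
  field_simp
  linear_combination -this

namespace PossibleForest

def cnt (S : PossibleForest) (a : ℕ) : ℕ := (S.V.filter (fun v => v < a)).card

theorem fst_mem (S : PossibleForest) {e : ℕ × ℕ} (he : e ∈ S.E) : e.1 ∈ S.V :=
  Finset.mem_union_left _ (Finset.mem_image_of_mem _ he)

theorem snd_mem (S : PossibleForest) {e : ℕ × ℕ} (he : e ∈ S.E) : e.2 ∈ S.V :=
  Finset.mem_union_right _ (Finset.mem_image_of_mem _ he)

theorem one_le_V (S : PossibleForest) {v : ℕ} (hv : v ∈ S.V) : 1 ≤ v := by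
  rcases Finset.mem_union.mp hv with h | h
  · obtain ⟨e, he, rfl⟩ := Finset.mem_image.mp h
    have := S.one_le e he
    have := S.snd_lt_fst e he
    omega
  · obtain ⟨e, he, rfl⟩ := Finset.mem_image.mp h
    exact S.one_le e he

theorem cnt_le (S : PossibleForest) (a : ℕ) : S.cnt a ≤ a - 1 := by
  unfold cnt
  calc _ ≤ (Finset.Ico 1 a).card := by
        apply Finset.card_le_card
        intro v hv
        simp only [Finset.mem_filter, Finset.mem_Ico] at *
        exact ⟨S.one_le_V hv.1, hv.2⟩
    _ = _ := by simp

theorem cnt_succ_notMem (S : PossibleForest) (a : ℕ) (ha : a ∉ S.V) :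
    S.cnt (a + 1) = S.cnt a := by
  unfold cnt
  congr 1
  apply Finset.filter_congr
  intro v hv
  have : v ≠ a := fun h => ha (h ▸ hv)
  omega

theorem cnt_pos (S : PossibleForest) (a v : ℕ) (hv : v ∈ S.V) (h : v < a) : 1 ≤ S.cnt a :=
  Finset.card_pos.mpr ⟨v, Finset.mem_filter.mpr ⟨hv, h⟩⟩

theorem cS_succ_notMem (S : PossibleForest) (a : ℕ) (ha : a ∉ S.V) :
    S.cS (a + 1) = S.cS a := by
  unfold cS
  congr 1
  apply Finset.filter_congr
  intro e he
  have h1 : e.1 ≠ a := fun h => ha (h ▸ S.fst_mem he)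
  have h2 : e.2 ≠ a := fun h => ha (h ▸ S.snd_mem he)
  omega

theorem cS_one (S : PossibleForest) : S.cS 1 = 0 := by
  unfold cS
  rw [Finset.card_eq_zero, Finset.filter_false_of_mem]
  intro e he h
  have := S.one_le e he
  omega

theorem cS_top (S : PossibleForest) (n : ℕ) (hS : ∀ i ∈ S.V, i ≤ n) : S.cS (n + 1) = 0 := by
  unfold cS
  rw [Finset.card_eq_zero, Finset.filter_false_of_mem]
  intro e he h
  have := hS _ (S.fst_mem he)
  omega

theorem sum_bound_aux (S : PossibleForest) (n : ℕ) (hn : 1 ≤ n) :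
    ∑ a ∈ Finset.Icc 2 n, (S.cS a : ℝ) ^ 2 / ((a : ℝ) * ((a : ℝ) - 1))
      + (S.cS (n + 1) : ℝ) ^ 2 / n ≤
    ∑ v ∈ S.V.filter (fun v => v ≤ n), (S.cS v : ℝ) ^ 2 / (S.cnt v)
      + (S.cS (n + 1) : ℝ) ^ 2 / S.cnt (n + 1) := by
  have hmem : ∀ m : ℕ, m ∈ S.V → (S.cS (m + 1) : ℝ) ^ 2 / m ≤
      (S.cS (m + 1) : ℝ) ^ 2 / S.cnt (m + 1) := by
    intro m hm
    have h1 : 1 ≤ S.cnt (m + 1) := S.cnt_pos _ m hm (by omega)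
    have h2 : S.cnt (m + 1) ≤ m := S.cnt_le (m + 1)
    have h1' : (0 : ℝ) < S.cnt (m + 1) := by exact_mod_cast h1
    have h2' : (S.cnt (m + 1) : ℝ) ≤ m := by exact_mod_cast h2
    gcongr
  induction n, hn using Nat.le_induction with
  | base =>
    have h0 : 0 ≤ ∑ v ∈ S.V.filter (fun v => v ≤ 1), (S.cS v : ℝ) ^ 2 / (S.cnt v) :=
      Finset.sum_nonneg fun v _ => by positivity
    by_cases h : 1 ∈ S.V
    · have := hmem 1 h
      simp only [Finset.Icc_eq_empty_of_lt (show 1 < 2 by norm_num), Finset.sum_empty] at *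
      linarith
    · rw [S.cS_succ_notMem 1 h, S.cS_one]
      simpa using h0
  | succ n hn ih =>
    have hn' : (1 : ℝ) ≤ n := by exact_mod_cast hn
    rw [Icc_two_succ n hn, Finset.sum_insert (by simp)]
    have h3 : (S.cS (n + 1) : ℝ) ^ 2 / (((n + 1 : ℕ) : ℝ) * (((n + 1 : ℕ) : ℝ) - 1)) =
        (S.cS (n + 1) : ℝ) ^ 2 / n - (S.cS (n + 1) : ℝ) ^ 2 / ((n + 1 : ℕ) : ℝ) := by
      push_cast
      rw [add_sub_cancel_right]
      field_simp
      ring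
    rw [h3]
    by_cases h : n + 1 ∈ S.V
    · have h4 : S.V.filter (fun v => v ≤ n + 1) = insert (n + 1) (S.V.filter (fun v => v ≤ n)) := by
        ext v
        simp only [Finset.mem_filter, Finset.mem_insert]
        constructor
        · rintro ⟨a, b⟩
          by_cases hv : v = n + 1
          · left; exact hv
          · right; exact ⟨a, by omega⟩
        · rintro (rfl | ⟨a, b⟩)
          · exact ⟨h, le_rfl⟩
          · exact ⟨a, by omega⟩
      rw [h4, Finset.sum_insert (by simp)]
      have := hmem (n + 1) h
      have h5 : 0 ≤ (S.cS (n + 1) : ℝ) ^ 2 / ((n + 1 : ℕ) : ℝ) := by positivity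
      linarith
    · have h4 : S.V.filter (fun v => v ≤ n + 1) = S.V.filter (fun v => v ≤ n) := by
        apply Finset.filter_congr
        intro v hv
        have : v ≠ n + 1 := fun h' => h (h' ▸ hv)
        omega
      rw [h4, S.cS_succ_notMem (n + 1) h, S.cnt_succ_notMem (n + 1) h]
      linarith

theorem sum_bound (S : PossibleForest) (n : ℕ) (hS : ∀ i ∈ S.V, i ≤ n) :
    ∑ a ∈ Finset.Icc 2 n, (S.cS a : ℝ) ^ 2 / ((a : ℝ) * ((a : ℝ) - 1)) ≤
    ∑ v ∈ S.V, (S.cS v : ℝ) ^ 2 / (S.cnt v) := by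
  rcases Nat.eq_zero_or_pos n with rfl | hn
  · rw [Finset.Icc_eq_empty_of_lt (by norm_num), Finset.sum_empty]
    exact Finset.sum_nonneg fun v _ => by positivity
  · have := S.sum_bound_aux n hn
    rw [S.cS_top n hS, Finset.filter_true_of_mem hS] at this
    simpa using this

theorem sum_fin (S : PossibleForest) :
    ∑ j : Fin S.V.card, (if 1 ≤ (j : ℕ) then
              ((S.cS ((S.V.orderIsoOfFin rfl j : ℕ)) : ℝ)) ^ 2 / ((j : ℕ) : ℝ)
            else 0) = ∑ v ∈ S.V, (S.cS v : ℝ) ^ 2 / (S.cnt v) := by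
  rw [← Finset.sum_coe_sort S.V]
  refine Fintype.sum_equiv (S.V.orderIsoOfFin rfl).toEquiv _ _ fun j => ?_
  have h : S.cnt (S.V.orderIsoOfFin rfl j : ℕ) = j := by
    unfold cnt
    have : S.V.filter (fun v => v < (S.V.orderIsoOfFin rfl j : ℕ)) =
        (Finset.Iio j).image (fun i => (S.V.orderIsoOfFin rfl i : ℕ)) := by
      ext v
      simp only [Finset.mem_filter, Finset.mem_image, Finset.mem_Iio]
      constructor
      · rintro ⟨hv, h⟩
        refine ⟨(S.V.orderIsoOfFin rfl).symm ⟨v, hv⟩, ?_, by simp⟩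
        rw [OrderIso.symm_apply_lt]
        exact h
      · rintro ⟨i, hi, rfl⟩
        refine ⟨(S.V.orderIsoOfFin rfl i).2, ?_⟩
        have := (S.V.orderIsoOfFin rfl).lt_iff_lt.mpr hi
        exact this
    rw [this, Finset.card_image_of_injective]
    · simp
    · intro a b hab
      exact (S.V.orderIsoOfFin rfl).injective (Subtype.ext hab)
  change _ = (S.cS (S.V.orderIsoOfFin rfl j : ℕ) : ℝ) ^ 2 / (S.cnt (S.V.orderIsoOfFin rfl j : ℕ) : ℝ)
  rw [h]
  split_ifs with h1
  · rfl
  · have : (j : ℕ) = 0 := by omega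
    simp [this]

end PossibleForest

theorem log_ratio (a : ℕ) (ha : 2 ≤ a) :
    1 / (a : ℝ) ≤ Real.log a - Real.log ((a : ℝ) - 1) ∧
      Real.log a - Real.log ((a : ℝ) - 1) ≤ 1 / ((a : ℝ) - 1) := by
  have h2 : (2 : ℝ) ≤ a := by exact_mod_cast ha
  have hp : (0 : ℝ) < (a : ℝ) - 1 := by linarith
  have hp' : (0 : ℝ) < (a : ℝ) := by linarith
  rw [← Real.log_div hp'.ne' hp.ne']
  constructor
  · have := Real.one_sub_inv_le_log_of_pos (x := (a : ℝ) / (a - 1)) (by positivity)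
    refine le_trans (le_of_eq ?_) this
    field_simp
    ring
  · have := Real.log_le_sub_one_of_pos (x := (a : ℝ) / (a - 1)) (by positivity)
    refine le_trans this (le_of_eq ?_)
    field_simp
    ring

theorem fac_pos (S : PossibleForest) (β : ℝ) (hβ : 0 < β) (a : ℕ) (ha : 2 ≤ a) :
    0 < fac S β a := by
  obtain ⟨-, hZ⟩ := ZZ_pos β hβ a ha
  unfold fac
  split_ifs <;> positivity

noncomputable def thA (S : PossibleForest) (β : ℝ) (a : ℕ) : ℝ :=
  Real.log (fac S β a) + (if a ∈ S.Vplus then Real.log ((2 + β) * a) else 0)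
    - S.cS a / (2 + β) * (Real.log a - Real.log ((a : ℝ) - 1))

noncomputable def CC (β : ℝ) : ℝ := (4 + β) / β + 1 / (2 + β)
noncomputable def DD (β : ℝ) : ℝ := (4 + β) / ((2 + β) * β) + 2 / β ^ 2

theorem thA_mem (S : PossibleForest) (β : ℝ) (hβ : 0 < β) (a : ℕ) (ha : 2 ≤ a)
    (h : a ∈ S.Vplus) : |thA S β a| ≤ CC β * ((S.cS a : ℝ) ^ 2 / S.cnt a) := by
  obtain ⟨hZ1, hZ⟩ := ZZ_pos β hβ a ha
  obtain ⟨hl1, hl2⟩ := log_ratio a ha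
  have h2 : (2 : ℝ) ≤ a := by exact_mod_cast ha
  have hp : (0 : ℝ) < (a : ℝ) - 1 := by linarith
  obtain ⟨e, he, rfl⟩ := Finset.mem_image.mp h
  have hlt := S.snd_lt_fst e he
  have hc : 1 ≤ S.cS e.1 :=
    Finset.card_pos.mpr ⟨e, Finset.mem_filter.mpr ⟨he, le_rfl, hlt⟩⟩
  have hc' : (1 : ℝ) ≤ S.cS e.1 := by exact_mod_cast hc
  have hN : 1 ≤ S.cnt e.1 := S.cnt_pos _ _ (S.snd_mem he) hlt
  have hN' : (0 : ℝ) < S.cnt e.1 := by exact_mod_cast hN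
  have hN2 : (S.cnt e.1 : ℝ) ≤ (e.1 : ℝ) - 1 := by
    have := S.cnt_le e.1
    have h3 : S.cnt e.1 + 1 ≤ e.1 := by omega
    have : (S.cnt e.1 : ℝ) + 1 ≤ e.1 := by exact_mod_cast h3
    linarith
  unfold thA fac
  rw [if_pos h, if_pos h]
  generalize (e.1 : ℝ) = x at *
  generalize (S.cS e.1 : ℝ) = c at *
  generalize (S.cnt e.1 : ℝ) = N at *
  set Z := (2 + β) * (x - 1) - 2 with hZdef
  have hx : 0 < x := by linarith
  have e1 : Real.log (1 / Z) + Real.log ((2 + β) * x) = Real.log (1 + (4 + β) / Z) := by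
    rw [← Real.log_mul (by positivity) (by positivity)]
    congr 1
    field_simp
    rw [hZdef]
    ring
  rw [e1]
  have u1 : Real.log (1 + (4 + β) / Z) ≤ (4 + β) / Z := by
    have := Real.log_le_sub_one_of_pos (x := 1 + (4 + β) / Z) (by positivity)
    linarith
  have u0 : 0 ≤ Real.log (1 + (4 + β) / Z) := by
    apply Real.log_nonneg
    have : 0 ≤ (4 + β) / Z := by positivity
    linarith
  have u2 : (4 + β) / Z ≤ (4 + β) / β * (1 / (x - 1)) := by
    rw [div_mul_div_comm, mul_one]
    gcongr
  have v0 : 0 ≤ c / (2 + β) * (Real.log x - Real.log (x - 1)) := by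
    apply mul_nonneg (by positivity)
    have : 0 ≤ 1 / x := by positivity
    linarith
  have v1 : c / (2 + β) * (Real.log x - Real.log (x - 1)) ≤ c / (2 + β) * (1 / (x - 1)) := by
    gcongr
  have w1 : 1 / (x - 1) ≤ 1 / N := by gcongr
  have w2 : 1 ≤ c ^ 2 := by nlinarith
  have w3 : c ≤ c ^ 2 := by nlinarith
  have w4 : (4 + β) / β * (1 / (x - 1)) ≤ (4 + β) / β * (c ^ 2 / N) := by
    gcongr
  have w5 : c / (2 + β) * (1 / (x - 1)) ≤ 1 / (2 + β) * (c ^ 2 / N) := by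
    calc c / (2 + β) * (1 / (x - 1)) ≤ c ^ 2 / (2 + β) * (1 / N) := by gcongr
      _ = _ := by ring
  unfold CC
  rw [add_mul, abs_le]
  constructor <;> linarith [show 0 ≤ (4 + β) / β * (c ^ 2 / N) by positivity,
    show 0 ≤ 1 / (2 + β) * (c ^ 2 / N) by positivity]

theorem thA_notMem (S : PossibleForest) (β : ℝ) (hβ : 0 < β) (a : ℕ) (ha : 2 ≤ a)
    (h : a ∉ S.Vplus) : |thA S β a| ≤ DD β * ((S.cS a : ℝ) ^ 2 / ((a : ℝ) * ((a : ℝ) - 1))) := by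
  obtain ⟨hZ1, hZ⟩ := ZZ_pos β hβ a ha
  obtain ⟨hl1, hl2⟩ := log_ratio a ha
  have h2 : (2 : ℝ) ≤ a := by exact_mod_cast ha
  have hp : (0 : ℝ) < (a : ℝ) - 1 := by linarith
  have w3 : (S.cS a : ℝ) ≤ (S.cS a : ℝ) ^ 2 := by
    exact_mod_cast Nat.le_self_pow (by norm_num) _
  have w0 : (0 : ℝ) ≤ (S.cS a : ℝ) := by positivity
  unfold thA fac
  rw [if_neg h, if_neg h, add_zero]
  generalize (a : ℝ) = x at *
  generalize (S.cS a : ℝ) = c at *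
  set Z := (2 + β) * (x - 1) - 2 with hZdef
  have hx : 0 < x := by linarith
  have hq : 0 ≤ c / Z := by positivity
  have u1 : Real.log (1 + c / Z) ≤ c / Z := by
    have := Real.log_le_sub_one_of_pos (x := 1 + c / Z) (by positivity)
    linarith
  have u2 : c / Z - (c / Z) ^ 2 ≤ Real.log (1 + c / Z) := by
    have := Real.one_sub_inv_le_log_of_pos (x := 1 + c / Z) (by positivity)
    refine le_trans ?_ this
    generalize c / Z = q at *
    have : 1 - (1 + q)⁻¹ = q / (1 + q) := by
      field_simp
      ring
    rw [this, le_div_iff₀ (by positivity)]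
    nlinarith [pow_nonneg hq 3]
  have u3 : (c / Z) ^ 2 ≤ 2 / β ^ 2 * (c ^ 2 / (x * (x - 1))) := by
    calc (c / Z) ^ 2 ≤ (c / (β * (x - 1))) ^ 2 := by gcongr
      _ = 1 / β ^ 2 * (c ^ 2 / ((x - 1) * (x - 1))) := by
        field_simp
      _ ≤ 1 / β ^ 2 * (c ^ 2 / ((x / 2) * (x - 1))) := by
        gcongr
        linarith
      _ = _ := by
        field_simp
  have v1 : c / (2 + β) * (Real.log x - Real.log (x - 1)) ≤ c / (2 + β) * (1 / (x - 1)) := by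
    gcongr
  have v2 : c / (2 + β) * (1 / x) ≤ c / (2 + β) * (Real.log x - Real.log (x - 1)) := by
    gcongr
  have v3 : c / (2 + β) * (1 / (x - 1)) ≤ c / Z := by
    rw [div_mul_div_comm, mul_one]
    gcongr
    linarith
  have v4 : c / Z - c / (2 + β) * (1 / x) ≤ (4 + β) / ((2 + β) * β) * (c ^ 2 / (x * (x - 1))) := by
    calc c / Z - c / (2 + β) * (1 / x) = (4 + β) / (2 + β) * (c / (x * Z)) := by
          field_simp
          rw [hZdef]
          ring
      _ ≤ (4 + β) / (2 + β) * (c ^ 2 / (x * (β * (x - 1)))) := by gcongr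
      _ = _ := by field_simp
  unfold DD
  rw [add_mul, abs_le]
  have y1 : 0 ≤ (4 + β) / ((2 + β) * β) * (c ^ 2 / (x * (x - 1))) := by positivity
  have y2 : 0 ≤ 2 / β ^ 2 * (c ^ 2 / (x * (x - 1))) := by positivity
  constructor <;> linarith

theorem log_tele (n b i : ℕ) (hb : 1 ≤ b) (hbi : b ≤ i) (hin : i ≤ n) :
    Real.log i - Real.log b = ∑ a ∈ Finset.Icc 2 n,
      if a ≤ i ∧ b < a then (Real.log a - Real.log ((a : ℝ) - 1)) else 0 := by
  rw [← Finset.sum_filter]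
  have : (Finset.Icc 2 n).filter (fun a => a ≤ i ∧ b < a) = Finset.Ico (b + 1) (i + 1) := by
    ext x
    simp only [Finset.mem_filter, Finset.mem_Icc, Finset.mem_Ico]
    omega
  rw [this, ← Finset.sum_Ico_add' _ b i 1]
  have := Finset.sum_Ico_sub (fun k : ℕ => Real.log (k : ℝ)) hbi
  rw [← this]
  refine Finset.sum_congr rfl fun k _ => ?_
  push_cast
  rw [add_sub_cancel_right]

theorem edge_part (S : PossibleForest) (β : ℝ) (hβ : 0 < β) (n : ℕ)
    (hS : ∀ i ∈ S.V, i ≤ n) :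
    ∏ a ∈ Finset.Icc 2 n, fac S β a =
      (∏ e ∈ S.E, 1 / ((2 + β) * (((e.1 : ℝ) ^ (1 + β) * (e.2 : ℝ)) ^ (1 / (2 + β)))))
            * Real.exp (∑ a ∈ Finset.Icc 2 n, thA S β a) := by
  have h1 : ∏ a ∈ Finset.Icc 2 n, fac S β a =
      Real.exp (∑ a ∈ Finset.Icc 2 n, Real.log (fac S β a)) := by
    rw [Real.exp_sum]
    refine Finset.prod_congr rfl fun a ha => ?_
    rw [Real.exp_log (fac_pos S β hβ a (Finset.mem_Icc.mp ha).1)]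
  have h2 : (∏ e ∈ S.E, 1 / ((2 + β) * (((e.1 : ℝ) ^ (1 + β) * (e.2 : ℝ)) ^ (1 / (2 + β))))) =
      Real.exp (∑ e ∈ S.E, (1 / (2 + β) * (Real.log e.1 - Real.log e.2)
        - Real.log ((2 + β) * e.1))) := by
    rw [Real.exp_sum]
    refine Finset.prod_congr rfl fun e he => ?_
    have p2 : (0 : ℝ) < e.2 := by exact_mod_cast S.one_le e he
    have p1 : (0 : ℝ) < e.1 := by exact_mod_cast lt_of_le_of_lt (Nat.zero_le _) (S.snd_lt_fst e he)
    rw [← Real.exp_log (show 0 < 1 / ((2 + β) * (((e.1 : ℝ) ^ (1 + β) * (e.2 : ℝ)) ^ (1 / (2 + β)))) by positivity)]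
    congr 1
    rw [one_div, Real.log_inv, Real.log_mul (by positivity) (by positivity),
      Real.log_rpow (by positivity), Real.log_mul (by positivity) (by positivity),
      Real.log_rpow p1, Real.log_mul (by positivity) (by positivity)]
    field_simp
    ring
  have h3 : ∑ e ∈ S.E, Real.log ((2 + β) * e.1) =
      ∑ a ∈ Finset.Icc 2 n, if a ∈ S.Vplus then Real.log ((2 + β) * a) else 0 := by
    rw [← Finset.sum_filter]
    have : (Finset.Icc 2 n).filter (fun a => a ∈ S.Vplus) = S.E.image Prod.fst := by
      ext a
      rw [Finset.mem_filter, Finset.mem_Icc]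
      refine ⟨fun h => h.2, fun h => ⟨?_, h⟩⟩
      obtain ⟨e, he, rfl⟩ := Finset.mem_image.mp h
      have := S.one_le e he
      have := S.snd_lt_fst e he
      have := hS _ (S.fst_mem he)
      omega
    rw [this, Finset.sum_image]
    intro e he e' he' h
    exact S.outdeg_le_one e he e' he' h
  have h4 : ∑ e ∈ S.E, (Real.log e.1 - Real.log e.2) =
      ∑ a ∈ Finset.Icc 2 n, (S.cS a : ℝ) * (Real.log a - Real.log ((a : ℝ) - 1)) := by
    rw [Finset.sum_congr rfl (fun e he => log_tele n e.2 e.1 (S.one_le e he)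
      (S.snd_lt_fst e he).le (hS _ (S.fst_mem he))), Finset.sum_comm]
    refine Finset.sum_congr rfl fun a _ => ?_
    rw [← Finset.sum_filter, Finset.sum_const, nsmul_eq_mul]
    rfl
  rw [h1, h2, ← Real.exp_add]
  congr 1
  rw [Finset.sum_sub_distrib, ← Finset.mul_sum, h3, h4, Finset.mul_sum, ← Finset.sum_sub_distrib,
    ← Finset.sum_add_distrib]
  refine Finset.sum_congr rfl fun a _ => ?_
  unfold thA
  ring

end helpers

/-- **Lemma 3.2.** For `β > 0` there is a constant `K > 0` depending only on `β` such that
for every possible forest `S` with vertices `v_{s_1} < … < v_{s_k}` and every `t ≥ s_k`,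
`Pr(S ⊆ G^t_{1,β}) = β/(d^in_S(v_1)+β) · ∏_{v_i∈V^-} Γ(1+d^in_S(v_i)+β)/Γ(1+β)
 · ∏_{(v_i,v_j)∈E(S)} 1/((2+β)(i^{1+β}j)^{1/(2+β)}) · e^θ`
with `|θ| ≤ K · Σ_{j=2}^{k} c_S(s_j)²/(j−1)`.  Here the `j`-th smallest vertex `s_j`
is `S.V.orderIsoOfFin rfl ⟨j-1, _⟩`, and the sum below runs over indices `j : Fin S.V.card`
with `1 ≤ j`, the index `j` corresponding to `s_{j+1}` with denominator `j`. -/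
theorem subgraph_probability_closed_form (β : ℝ) (hβ : 0 < β) :
    ∃ K : ℝ, 0 < K ∧ ∀ S : PossibleForest, ∀ t : ℕ, (∀ i ∈ S.V, i ≤ t) →
      ∃ θ : ℝ,
        (|θ| ≤ K * ∑ j : Fin S.V.card,
            (if 1 ≤ (j : ℕ) then
              ((S.cS ((S.V.orderIsoOfFin rfl j : ℕ)) : ℝ)) ^ 2 / ((j : ℕ) : ℝ)
            else 0)) ∧
        subProb β t S =
          β / ((S.din 1 : ℝ) + β)
            * (∏ i ∈ S.Vminus, Real.Gamma (1 + (S.din i : ℝ) + β) / Real.Gamma (1 + β))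
            * (∏ e ∈ S.E, 1 / ((2 + β) * (((e.1 : ℝ) ^ (1 + β) * (e.2 : ℝ)) ^ (1 / (2 + β)))))
            * Real.exp θ := by
  refine ⟨CC β + DD β, by unfold CC DD; positivity, fun S t hS => ?_⟩
  refine ⟨∑ a ∈ Finset.Icc 2 t, thA S β a, ?_, ?_⟩
  · rw [S.sum_fin]
    have hC : 0 ≤ CC β := by unfold CC; positivity
    have hD : 0 ≤ DD β := by unfold DD; positivity
    have hb : ∀ a ∈ Finset.Icc 2 t, |thA S β a| ≤
        CC β * (if a ∈ S.Vplus then (S.cS a : ℝ) ^ 2 / S.cnt a else 0) +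
        DD β * ((S.cS a : ℝ) ^ 2 / ((a : ℝ) * ((a : ℝ) - 1))) := by
      intro a ha
      have ha2 := (Finset.mem_Icc.mp ha).1
      have h2 : (2 : ℝ) ≤ a := by exact_mod_cast ha2
      have hp : (0 : ℝ) < (a : ℝ) - 1 := by linarith
      by_cases h : a ∈ S.Vplus
      · rw [if_pos h]
        have := thA_mem S β hβ a ha2 h
        have : 0 ≤ DD β * ((S.cS a : ℝ) ^ 2 / ((a : ℝ) * ((a : ℝ) - 1))) := by positivity
        linarith
      · rw [if_neg h]
        have := thA_notMem S β hβ a ha2 h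
        linarith
    refine (Finset.abs_sum_le_sum_abs _ _).trans ((Finset.sum_le_sum hb).trans ?_)
    rw [Finset.sum_add_distrib, ← Finset.mul_sum, ← Finset.mul_sum, add_mul,
      ← Finset.sum_filter]
    refine add_le_add (mul_le_mul_of_nonneg_left ?_ hC)
      (mul_le_mul_of_nonneg_left (S.sum_bound t hS) hD)
    apply Finset.sum_le_sum_of_subset_of_nonneg
    · intro a ha
      exact Finset.mem_union_left _ (Finset.mem_filter.mp ha).2
    · intro a _ _
      positivity
  · rw [subProb_eq S β hβ t hS, Finset.prod_mul_distrib, ← mul_assoc, gamma_part S β hβ t hS,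
      edge_part S β hβ t hS]
    ring
end

section
/- Let β > 0 and let m ≥ 1 be an integer. There exists K > 0 depending only on m and β such that for all integers n ≥ 1 and all 1 ≤ a < b < c ≤ n, the expected number of triangles of G^n_{m,β} on the vertices u_a, u_b, u_c satisfies E[m(a,b)·m(a,c)·m(b,c)] = (m(m−1)(1+β)²/(2+β)² + m(m−1)²(1+β)³/(2+β)³) · (a²·b^{2+β}·c^{2+2β})^{−1/(2+β)} · (1+θ) for some real θ with |θ| ≤ K/a. -/
open Finset

namespace MT

def snoc {N : ℕ} (f : ParentSeq N) (i : {x // x ∈ Finset.Icc 1 N}) : ParentSeq (N + 1) :=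
  fun t => if h : (t : ℕ) ≤ N then f ⟨t, Set.mem_Icc.mpr ⟨(Set.mem_Icc.mp t.2).1, h⟩⟩
    else ⟨i.1, by
      have h1 := Finset.mem_Icc.mp i.2
      have h2 := Set.mem_Icc.mp t.2
      exact Set.mem_Icc.mpr ⟨h1.1, by omega⟩⟩

lemma pval_snoc {N : ℕ} (hN : 1 ≤ N) (f : ParentSeq N) (i : {x // x ∈ Finset.Icc 1 N}) :
    pval (snoc f i) = Function.update (pval f) (N + 1) i.1 := by
  funext j
  by_cases hj : j = N + 1
  · subst hj
    rw [Function.update_self]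
    unfold pval snoc
    rw [dif_pos ⟨by omega, le_refl _⟩]
    simp
  · rw [Function.update_of_ne hj]
    unfold pval snoc
    by_cases h : 2 ≤ j ∧ j ≤ N
    · rw [dif_pos h, dif_pos ⟨h.1, by omega⟩]
      simp [h.2]
    · rw [dif_neg h, dif_neg (by omega)]

lemma pval_le {N : ℕ} (f : ParentSeq N) (j : ℕ) : pval f j ≤ N := by
  unfold pval
  split_ifs with h
  · have := Set.mem_Icc.mp (f ⟨j, Set.mem_Icc.mpr h⟩).2
    simp only at this
    omega
  · omega

lemma pval_lt {N : ℕ} (f : ParentSeq N) (j : ℕ) (h : 2 ≤ j) : pval f j < j := by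
  unfold pval
  split_ifs with h
  · have := Set.mem_Icc.mp (f ⟨j, Set.mem_Icc.mpr h⟩).2
    simp only at this
    omega
  · omega

lemma pval_ge {N : ℕ} (f : ParentSeq N) (j : ℕ) (h : 2 ≤ j) (h' : j ≤ N) : 1 ≤ pval f j := by
  unfold pval
  rw [dif_pos ⟨h, h'⟩]
  exact (Set.mem_Icc.mp (f ⟨j, Set.mem_Icc.mpr ⟨h, h'⟩⟩).2).1

lemma snoc_bij {N : ℕ} (hN : 1 ≤ N) :
    Function.Bijective (fun p : ParentSeq N × {x // x ∈ Finset.Icc 1 N} => snoc p.1 p.2) := by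
  constructor
  · rintro ⟨f, i⟩ ⟨g, k⟩ h
    simp only at h
    have hi : i = k := by
      have := congrFun (congrArg pval h) (N + 1)
      rw [pval_snoc hN, pval_snoc hN] at this
      rw [Function.update_self, Function.update_self] at this
      exact Subtype.ext this
    have hf : f = g := by
      funext t
      have h2 := Set.mem_Icc.mp t.2
      have := congrFun h ⟨t, Set.mem_Icc.mpr ⟨h2.1, by omega⟩⟩
      unfold snoc at this
      rw [dif_pos h2.2, dif_pos h2.2] at this
      exact this
    rw [hi, hf]
  · intro f
    have h0 := (f ⟨N + 1, Set.mem_Icc.mpr ⟨by omega, le_refl _⟩⟩).2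
    refine ⟨⟨fun t => f ⟨t, Set.mem_Icc.mpr ⟨(Set.mem_Icc.mp t.2).1, by
      have := (Set.mem_Icc.mp t.2).2; omega⟩⟩, ⟨f ⟨N + 1, Set.mem_Icc.mpr ⟨by omega, le_refl _⟩⟩, by
      have := Set.mem_Icc.mp h0
      exact Finset.mem_Icc.mpr ⟨this.1, this.2⟩⟩⟩, ?_⟩
    funext t
    obtain ⟨t, ht⟩ := t
    have h2 := Set.mem_Icc.mp ht
    simp only [snoc]
    by_cases h : t ≤ N
    · rw [dif_pos h]
    · rw [dif_neg h]
      obtain rfl : t = N + 1 := by omega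
      rfl

def dg (g : ℕ → ℕ) (t i : ℕ) : ℕ :=
  ((Finset.Icc 2 t).filter (fun j => g j = i)).card + (if 2 ≤ i then 1 else 0)

lemma dg_upd (g : ℕ → ℕ) (t i k s : ℕ) (h : s ≤ t) : dg (Function.update g (t+1) i) s k = dg g s k := by
  unfold dg
  congr 2
  apply Finset.filter_congr
  intro j hj
  rw [Function.update_of_ne]
  have := Finset.mem_Icc.mp hj
  omega

lemma dg_upd_succ (g : ℕ → ℕ) (t i k : ℕ) (ht : 1 ≤ t) :
    dg (Function.update g (t+1) i) (t+1) k = dg g t k + if i = k then 1 else 0 := by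
  have h1 := dg_upd g t i k t le_rfl
  unfold dg at h1 ⊢
  have : Finset.Icc 2 (t+1) = insert (t+1) (Finset.Icc 2 t) := by
    ext x; simp; omega
  rw [this, Finset.filter_insert]
  by_cases hik : i = k
  · rw [if_pos (by simpa using hik), Finset.card_insert_of_notMem (by simp), if_pos hik]
    omega
  · rw [if_neg (by simpa using hik), if_neg hik]
    omega

noncomputable def Sn (β : ℝ) (t : ℕ) : ℝ := (2 + β) * (t : ℝ) - 2

lemma moriP_snoc {N : ℕ} (hN : 1 ≤ N) (β : ℝ) (f : ParentSeq N) (i : {x // x ∈ Finset.Icc 1 N}) :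
    moriP β (snoc f i) = moriP β f * (((dg (pval f) N i.1 : ℝ) + β) / Sn β N) := by
  unfold moriP
  rw [Finset.prod_Icc_succ_top (by omega)]
  have hd : ∀ {N : ℕ} (f : ParentSeq N), deg f = dg (pval f) := fun f => rfl
  congr 1
  · apply Finset.prod_congr rfl
    intro t ht
    have := Finset.mem_Icc.mp ht
    rw [hd, hd, pval_snoc hN, dg_upd _ _ _ _ _ (by omega), Function.update_of_ne (by omega)]
  · rw [hd, pval_snoc hN, dg_upd _ _ _ _ _ (by omega), Function.update_self]
    unfold Sn
    push_cast
    simp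

noncomputable def EE (β : ℝ) (t : ℕ) (F : (ℕ → ℕ) → ℝ) : ℝ := moriE t β (fun f => F (pval f))

lemma EE_step (β : ℝ) (t : ℕ) (ht : 1 ≤ t) (F : (ℕ → ℕ) → ℝ) :
    EE β (t+1) F = EE β t (fun g => ∑ i ∈ Finset.Icc 1 t,
      ((dg g t i : ℝ) + β) / Sn β t * F (Function.update g (t+1) i)) := by
  unfold EE moriE
  rw [← Fintype.sum_bijective _ (snoc_bij ht) (fun p => moriP β (snoc p.1 p.2) * F (pval (snoc p.1 p.2)))
    _ (fun p => rfl), Fintype.sum_prod_type]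
  apply Finset.sum_congr rfl
  intro f _
  rw [Finset.mul_sum]
  refine Eq.trans ?_ (Finset.sum_coe_sort (Finset.Icc 1 t) _)
  apply Finset.sum_congr rfl
  intro i _
  simp only
  rw [moriP_snoc ht, pval_snoc ht]
  ring

lemma EE_congr (β : ℝ) (t : ℕ) (F G : (ℕ → ℕ) → ℝ)
    (h : ∀ g : ℕ → ℕ, (∀ j, g j ≤ t) → (∀ j, 2 ≤ j → g j < j) →
      (∀ j, 2 ≤ j → j ≤ t → 1 ≤ g j) → F g = G g) : EE β t F = EE β t G := by
  unfold EE moriE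
  apply Finset.sum_congr rfl
  intro f _
  simp only
  rw [h _ (pval_le f) (pval_lt f) (pval_ge f)]

lemma EE_add (β : ℝ) (t : ℕ) (F G : (ℕ → ℕ) → ℝ) :
    EE β t (fun g => F g + G g) = EE β t F + EE β t G := by
  unfold EE moriE
  rw [← Finset.sum_add_distrib]
  apply Finset.sum_congr rfl
  intro f _
  ring

lemma EE_smul (β : ℝ) (t : ℕ) (k : ℝ) (F : (ℕ → ℕ) → ℝ) :
    EE β t (fun g => k * F g) = k * EE β t F := by
  unfold EE moriE
  rw [Finset.mul_sum]
  apply Finset.sum_congr rfl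
  intro f _
  ring

lemma EE_one (β : ℝ) (F : (ℕ → ℕ) → ℝ) : EE β 1 F = F (fun _ => 0) := by
  have hp : ∀ f : ParentSeq 1, pval f = fun _ => 0 := by
    intro f
    funext j
    unfold pval
    rw [dif_neg (by omega)]
  have hs : Subsingleton (ParentSeq 1) := ⟨fun f g => by
    funext t
    have := Set.mem_Icc.mp t.2
    omega⟩
  let f0 : ParentSeq 1 := fun t => ⟨1, by have := Set.mem_Icc.mp t.2; omega⟩
  unfold EE moriE
  rw [Fintype.sum_subsingleton _ f0]
  simp only [hp]
  simp [moriP]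

lemma dg_sum (β : ℝ) (t : ℕ) (ht : 1 ≤ t) : ∀ g : ℕ → ℕ, (∀ j, 2 ≤ j → j ≤ t → 1 ≤ g j) → (∀ j, 2 ≤ j → g j < j) →
    ∑ i ∈ Finset.Icc 1 t, ((dg g t i : ℝ) + β) = Sn β t := by
  intro g h1 h2
  have hA : ∑ i ∈ Finset.Icc 1 t, ((Finset.Icc 2 t).filter (fun j => g j = i)).card = (Finset.Icc 2 t).card := by
    symm
    apply Finset.card_eq_sum_card_fiberwise
    intro j hj
    have hj := Finset.mem_Icc.mp hj
    have := h1 j hj.1 hj.2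
    have := h2 j hj.1
    simp; omega
  have hB : ∑ i ∈ Finset.Icc 1 t, (if 2 ≤ i then 1 else 0 : ℕ) = t - 1 := by
    rw [← Finset.card_filter]
    have : (Finset.Icc 1 t).filter (fun i => 2 ≤ i) = Finset.Icc 2 t := by
      ext x; simp; omega
    rw [this]; simp
  have hC : ∑ i ∈ Finset.Icc 1 t, dg g t i = 2 * (t - 1) := by
    unfold dg
    rw [Finset.sum_add_distrib, hA, hB]
    simp; omega
  rw [Finset.sum_add_distrib, ← Nat.cast_sum, hC]
  unfold Sn
  simp
  rw [Nat.cast_sub ht]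
  push_cast
  ring

noncomputable def MM (m t b a : ℕ) (g : ℕ → ℕ) : ℝ :=
  (((Finset.Icc 2 t).filter (fun j => blk m j = b ∧ blk m (g j) = a)).card : ℝ)

noncomputable def WW (β : ℝ) (m a t : ℕ) (g : ℕ → ℕ) : ℝ :=
  ∑ i ∈ (Finset.Icc 1 t).filter (fun i => blk m i = a), ((dg g t i : ℝ) + β)

noncomputable def di (m t a : ℕ) : ℝ := if blk m t = a then 1 else 0

lemma MM_step (m t b a i : ℕ) (ht : 1 ≤ t) (g : ℕ → ℕ) :
    MM m (t+1) b a (Function.update g (t+1) i) = MM m t b a g + di m (t+1) b * di m i a := by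
  unfold MM di
  have : Finset.Icc 2 (t+1) = insert (t+1) (Finset.Icc 2 t) := by
    ext x; simp; omega
  have h2 : (Finset.Icc 2 t).filter (fun j => blk m j = b ∧ blk m (Function.update g (t+1) i j) = a)
      = (Finset.Icc 2 t).filter (fun j => blk m j = b ∧ blk m (g j) = a) := by
    apply Finset.filter_congr
    intro j hj
    rw [Function.update_of_ne]
    have := Finset.mem_Icc.mp hj
    omega
  rw [this, Finset.filter_insert, h2, Function.update_self]
  by_cases h3 : blk m (t+1) = b <;> by_cases h4 : blk m i = a <;> simp [h3, h4]

lemma WW_step (β : ℝ) (m t a i : ℕ) (ht : 1 ≤ t) (hi : i ∈ Finset.Icc 1 t) (g : ℕ → ℕ) (hg : ∀ j, g j ≤ t) :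
    WW β m a (t+1) (Function.update g (t+1) i) = WW β m a t g + di m i a + (1 + β) * di m (t+1) a := by
  have hi' := Finset.mem_Icc.mp hi
  unfold WW di
  rw [Finset.sum_filter, Finset.sum_Icc_succ_top (by omega), Finset.sum_filter]
  have e1 : ∀ k ∈ Finset.Icc 1 t, (if blk m k = a then
      ((dg (Function.update g (t+1) i) (t+1) k : ℕ) : ℝ) + β else 0) =
      (if blk m k = a then (dg g t k : ℝ) + β else 0) + if i = k then (if blk m i = a then 1 else 0) else 0 := by
    intro k _
    rw [dg_upd_succ _ _ _ _ ht]
    by_cases h1 : i = k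
    · subst h1
      by_cases h : blk m i = a <;> simp [h]
      ring
    · simp [h1]
  rw [Finset.sum_congr rfl e1, Finset.sum_add_distrib, Finset.sum_ite_eq, if_pos hi,
    dg_upd_succ _ _ _ _ ht]
  have e2 : dg g t (t+1) = 1 := by
    unfold dg
    rw [if_pos (by omega), Finset.filter_false_of_mem]
    · simp
    · intro j _
      have := hg j
      omega
  rw [e2, if_neg (by omega : ¬ i = t+1)]
  by_cases h : blk m (t+1) = a <;> simp [h]

noncomputable def ev (β : ℝ) (m a b c t : ℕ) (Φ : ℝ → ℝ → ℝ → ℝ → ℝ → ℝ) : ℝ :=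
  EE β t (fun g => Φ (MM m t b a g) (MM m t c a g) (MM m t c b g) (WW β m a t g) (WW β m b t g))

lemma split_sum (s : Finset ℕ) (m a b : ℕ) (hab : a ≠ b) (w : ℕ → ℝ) (H : ℝ → ℝ → ℝ) :
    ∑ i ∈ s, w i * H (di m i a) (di m i b) =
      (∑ i ∈ s.filter (fun i => blk m i = a), w i) * H 1 0 +
      (∑ i ∈ s.filter (fun i => blk m i = b), w i) * H 0 1 +
      (∑ i ∈ s, w i - (∑ i ∈ s.filter (fun i => blk m i = a), w i)
        - (∑ i ∈ s.filter (fun i => blk m i = b), w i)) * H 0 0 := by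
  simp only [Finset.sum_filter]
  rw [← Finset.sum_sub_distrib, ← Finset.sum_sub_distrib, Finset.sum_mul, Finset.sum_mul,
    Finset.sum_mul, ← Finset.sum_add_distrib, ← Finset.sum_add_distrib]
  apply Finset.sum_congr rfl
  intro i _
  unfold di
  by_cases h1 : blk m i = a
  · have h2 : ¬ blk m i = b := by rw [h1]; exact hab
    simp [h1, hab]
  · by_cases h2 : blk m i = b
    · simp [h2, hab.symm]
    · simp [h1, h2]

lemma ev_step (β : ℝ) (m a b c t : ℕ) (ht : 1 ≤ t) (hab : a ≠ b) (Φ : ℝ → ℝ → ℝ → ℝ → ℝ → ℝ) :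
    ev β m a b c (t+1) Φ = ev β m a b c t (fun M A B X Y =>
      (X * Φ (M + di m (t+1) b) (A + di m (t+1) c) B (X + 1 + (1 + β) * di m (t+1) a)
          (Y + (1 + β) * di m (t+1) b) +
       Y * Φ M A (B + di m (t+1) c) (X + (1 + β) * di m (t+1) a)
          (Y + 1 + (1 + β) * di m (t+1) b) +
       (Sn β t - X - Y) * Φ M A B (X + (1 + β) * di m (t+1) a)
          (Y + (1 + β) * di m (t+1) b)) / Sn β t) := by
  unfold ev
  rw [EE_step _ _ ht]
  apply EE_congr
  intro g h1 h2 h3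
  have := split_sum (Finset.Icc 1 t) m a b hab (fun i => (dg g t i : ℝ) + β)
    (fun x y => Φ (MM m t b a g + di m (t+1) b * x) (MM m t c a g + di m (t+1) c * x)
      (MM m t c b g + di m (t+1) c * y)
      (WW β m a t g + x + (1 + β) * di m (t+1) a) (WW β m b t g + y + (1 + β) * di m (t+1) b))
  simp only [mul_one, mul_zero, add_zero] at this
  rw [dg_sum β t ht g h3 h2] at this
  unfold WW at this ⊢
  beta_reduce
  rw [← this, Finset.sum_div]
  apply Finset.sum_congr rfl
  intro i hi
  have hw := WW_step β m t a i ht hi g h1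
  have hw' := WW_step β m t b i ht hi g h1
  unfold WW at hw hw'
  rw [MM_step _ _ _ _ _ ht, MM_step _ _ _ _ _ ht, MM_step _ _ _ _ _ ht, hw, hw']
  ring

lemma ev_add (β : ℝ) (m a b c t : ℕ) (Φ Ψ : ℝ → ℝ → ℝ → ℝ → ℝ → ℝ) :
    ev β m a b c t (fun M A B X Y => Φ M A B X Y + Ψ M A B X Y) =
      ev β m a b c t Φ + ev β m a b c t Ψ := by
  unfold ev
  rw [← EE_add]

lemma ev_smul (β : ℝ) (m a b c t : ℕ) (k : ℝ) (Φ : ℝ → ℝ → ℝ → ℝ → ℝ → ℝ) :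
    ev β m a b c t (fun M A B X Y => k * Φ M A B X Y) = k * ev β m a b c t Φ := by
  unfold ev
  rw [← EE_smul]

lemma Sn_ge (β : ℝ) (hβ : 0 < β) (t : ℕ) (ht : 1 ≤ t) : β * t ≤ Sn β t := by
  unfold Sn
  have : (1:ℝ) ≤ t := by exact_mod_cast ht
  nlinarith

lemma Sn_pos (β : ℝ) (hβ : 0 < β) (t : ℕ) (ht : 1 ≤ t) : 0 < Sn β t := by
  have h := Sn_ge β hβ t ht
  have : (1:ℝ) ≤ t := by exact_mod_cast ht
  nlinarith

lemma ev_const (β : ℝ) (hβ : 0 < β) (m a b c : ℕ) (hab : a ≠ b) (t : ℕ) (ht : 1 ≤ t) :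
    ev β m a b c t (fun _ _ _ _ _ => 1) = 1 := by
  induction t, ht using Nat.le_induction with
  | base => unfold ev; rw [EE_one]
  | succ t ht ih =>
    rw [ev_step _ _ _ _ _ _ ht hab]
    refine Eq.trans ?_ ih
    congr 1
    funext M A B X Y
    have := (Sn_pos β hβ t ht).ne'
    field_simp
    ring

def fL : ℝ → ℝ → ℝ → ℝ → ℝ → ℝ := fun _ _ _ X _ => X
def fZ : ℝ → ℝ → ℝ → ℝ → ℝ → ℝ := fun _ _ _ X _ => X * (X + 1)
def fU : ℝ → ℝ → ℝ → ℝ → ℝ → ℝ := fun M _ _ X _ => M * X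
def fV : ℝ → ℝ → ℝ → ℝ → ℝ → ℝ := fun _ _ _ X Y => X * (X + 1) * Y
def fP : ℝ → ℝ → ℝ → ℝ → ℝ → ℝ := fun M _ _ X Y => M * X * Y
def fQ : ℝ → ℝ → ℝ → ℝ → ℝ → ℝ := fun M A _ _ Y => M * A * Y
def fR : ℝ → ℝ → ℝ → ℝ → ℝ → ℝ := fun M _ B X _ => M * B * X
def fT : ℝ → ℝ → ℝ → ℝ → ℝ → ℝ := fun M A B _ _ => M * A * B

abbrev Tri := {p : ℕ × ℕ × ℕ // 1 ≤ p.1 ∧ p.1 < p.2.1 ∧ p.2.1 < p.2.2}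
abbrev ta (i : Tri) : ℕ := i.1.1
abbrev tb (i : Tri) : ℕ := i.1.2.1
abbrev tc (i : Tri) : ℕ := i.1.2.2

noncomputable def ex (β : ℝ) (m : ℕ) (i : Tri) (t : ℕ) (Φ : ℝ → ℝ → ℝ → ℝ → ℝ → ℝ) : ℝ :=
  ev β m (ta i) (tb i) (tc i) t Φ

lemma ex_add (β : ℝ) (m : ℕ) (i : Tri) (t : ℕ) (Φ Ψ : ℝ → ℝ → ℝ → ℝ → ℝ → ℝ) :
    ex β m i t (fun M A B X Y => Φ M A B X Y + Ψ M A B X Y) = ex β m i t Φ + ex β m i t Ψ :=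
  ev_add _ _ _ _ _ _ _ _

lemma ex_smul (β : ℝ) (m : ℕ) (i : Tri) (t : ℕ) (k : ℝ) (Φ : ℝ → ℝ → ℝ → ℝ → ℝ → ℝ) :
    ex β m i t (fun M A B X Y => k * Φ M A B X Y) = k * ex β m i t Φ :=
  ev_smul _ _ _ _ _ _ _ _

lemma ex_zero (β : ℝ) (m : ℕ) (i : Tri) (t : ℕ) :
    ex β m i t (fun _ _ _ _ _ => 0) = 0 := by
  have := ex_smul β m i t 0 (fun _ _ _ _ _ => 0)
  simpa using this

lemma tri (i : Tri) : 1 ≤ ta i ∧ ta i < tb i ∧ tb i < tc i := i.2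

lemma tri_ne (i : Tri) : ta i ≠ tb i ∧ ta i ≠ tc i ∧ tb i ≠ tc i := by
  obtain ⟨h1, h2, h3⟩ := tri i
  refine ⟨?_, ?_, ?_⟩ <;> omega

lemma di_self {m t a : ℕ} (hm : 1 ≤ m) (h1 : (a - 1) * m ≤ t) (h2 : t < a * m) : blk m (t+1) = a := by
  unfold blk
  have ha : 1 ≤ a := by
    rcases Nat.eq_zero_or_pos a with h | h
    · subst h; omega
    · exact h
  have : (t + 1 - 1) / m = a - 1 := by
    rw [Nat.div_eq_iff (by omega)]
    obtain ⟨k, rfl⟩ : ∃ k, a = k + 1 := ⟨a - 1, by omega⟩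
    simp at h1 ⊢
    rw [Nat.succ_mul] at h2
    omega
  omega

lemma blk_gt {m t a : ℕ} (hm : 1 ≤ m) (h1 : a * m ≤ t) : a < blk m (t+1) := by
  unfold blk
  have : a ≤ (t + 1 - 1) / m := by
    rw [Nat.le_div_iff_mul_le (by omega)]; omega
  omega

lemma blk_lt {m t a : ℕ} (h0 : 1 ≤ t) (h1 : t ≤ (a - 1) * m) : blk m t < a := by
  unfold blk
  have : (t - 1) / m < a - 1 := by
    apply Nat.div_lt_of_lt_mul
    rw [mul_comm]; omega
  generalize (t - 1) / m = q at *
  omega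

lemma di_one {m t a : ℕ} (h : blk m t = a) : di m t a = 1 := by simp [di, h]
lemma di_zero {m t a : ℕ} (h : blk m t ≠ a) : di m t a = 0 := by simp [di, h]

/-- step in block a -/
lemma recA (β : ℝ) (hβ : 0 < β) (m : ℕ) (i : Tri) (t : ℕ) (ht : 1 ≤ t)
    (hblk : blk m (t+1) = ta i) :
    ex β m i (t+1) fL = ex β m i t fL * (1 + 1 / Sn β t) + (1 + β) ∧
    ex β m i (t+1) fZ = ex β m i t fZ * (1 + 2 * (1 / Sn β t)) +
      ex β m i t fL * (2 * (1 + β) + 2 * (1 + β) * (1 / Sn β t)) + (1 + β) * (2 + β) := by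
  have hS := (Sn_pos β hβ t ht).ne'
  obtain ⟨h1, h2, h3⟩ := tri_ne i
  have da : di m (t+1) (ta i) = 1 := di_one hblk
  have db : di m (t+1) (tb i) = 0 := di_zero (by rw [hblk]; exact h1)
  have dc : di m (t+1) (tc i) = 0 := di_zero (by rw [hblk]; exact h2)
  have hone : ex β m i t (fun _ _ _ _ _ => 1) = 1 := ev_const β hβ m _ _ _ h1 t ht
  constructor
  · have : ex β m i (t+1) fL = ex β m i t (fun M A B X Y => (1 + 1 / Sn β t) * fL M A B X Y + (1 + β) * 1) := by
      unfold ex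
      rw [ev_step _ _ _ _ _ _ ht h1, da, db, dc]
      congr 1
      funext M A B X Y
      simp only [fL]
      field_simp
      ring
    rw [this, ex_add, ex_smul, ex_smul, hone]
    ring
  · have : ex β m i (t+1) fZ = ex β m i t (fun M A B X Y => (1 + 2 * (1 / Sn β t)) * fZ M A B X Y +
        ((2 * (1 + β) + 2 * (1 + β) * (1 / Sn β t)) * fL M A B X Y + ((1 + β) * (2 + β)) * 1)) := by
      unfold ex
      rw [ev_step _ _ _ _ _ _ ht h1, da, db, dc]
      congr 1
      funext M A B X Y
      simp only [fL, fZ]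
      field_simp
      ring
    rw [this, ex_add, ex_add, ex_smul, ex_smul, ex_smul, hone]
    ring

/-- step outside block a: Z -/
lemma recZ (β : ℝ) (hβ : 0 < β) (m : ℕ) (i : Tri) (t : ℕ) (ht : 1 ≤ t)
    (hblk : blk m (t+1) ≠ ta i) :
    ex β m i (t+1) fZ = ex β m i t fZ * (1 + 2 * (1 / Sn β t)) := by
  have hS := (Sn_pos β hβ t ht).ne'
  obtain ⟨h1, h2, h3⟩ := tri_ne i
  have da : di m (t+1) (ta i) = 0 := di_zero hblk
  have : ex β m i (t+1) fZ = ex β m i t (fun M A B X Y => (1 + 2 * (1 / Sn β t)) * fZ M A B X Y) := by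
    unfold ex
    rw [ev_step _ _ _ _ _ _ ht h1, da]
    congr 1
    funext M A B X Y
    simp only [fZ]
    field_simp
    ring
  rw [this, ex_smul]
  ring

lemma recB (β : ℝ) (hβ : 0 < β) (m : ℕ) (i : Tri) (t : ℕ) (ht : 1 ≤ t)
    (hblk : blk m (t+1) = tb i) :
    ex β m i (t+1) fU = ex β m i t fU * (1 + 1 / Sn β t) + ex β m i t fZ / Sn β t ∧
    ex β m i (t+1) fV = ex β m i t fV * (1 + 3 * (1 / Sn β t)) +
      ex β m i t fZ * ((1 + β) * (1 + 2 * (1 / Sn β t))) ∧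
    ex β m i (t+1) fP = ex β m i t fP * (1 + 2 * (1 / Sn β t)) +
      ex β m i t fU * ((1 + β) * (1 + 1 / Sn β t)) + ex β m i t fV / Sn β t +
      ex β m i t fZ / Sn β t * (1 + β) := by
  have hS := (Sn_pos β hβ t ht).ne'
  obtain ⟨h1, h2, h3⟩ := tri_ne i
  have da : di m (t+1) (ta i) = 0 := di_zero (by rw [hblk]; exact h1.symm)
  have db : di m (t+1) (tb i) = 1 := di_one hblk
  have dc : di m (t+1) (tc i) = 0 := di_zero (by rw [hblk]; exact h3)
  refine ⟨?_, ?_, ?_⟩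
  · have : ex β m i (t+1) fU = ex β m i t (fun M A B X Y => (1 + 1 / Sn β t) * fU M A B X Y +
        (1 / Sn β t) * fZ M A B X Y) := by
      unfold ex
      rw [ev_step _ _ _ _ _ _ ht h1, da, db, dc]
      congr 1
      funext M A B X Y
      simp only [fU, fZ]
      field_simp
      ring
    rw [this, ex_add, ex_smul, ex_smul]
    ring
  · have : ex β m i (t+1) fV = ex β m i t (fun M A B X Y => (1 + 3 * (1 / Sn β t)) * fV M A B X Y +
        ((1 + β) * (1 + 2 * (1 / Sn β t))) * fZ M A B X Y) := by
      unfold ex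
      rw [ev_step _ _ _ _ _ _ ht h1, da, db, dc]
      congr 1
      funext M A B X Y
      simp only [fV, fZ]
      field_simp
      ring
    rw [this, ex_add, ex_smul, ex_smul]
    ring
  · have : ex β m i (t+1) fP = ex β m i t (fun M A B X Y => (1 + 2 * (1 / Sn β t)) * fP M A B X Y +
        (((1 + β) * (1 + 1 / Sn β t)) * fU M A B X Y + ((1 / Sn β t) * fV M A B X Y +
          ((1 / Sn β t) * (1 + β)) * fZ M A B X Y))) := by
      unfold ex
      rw [ev_step _ _ _ _ _ _ ht h1, da, db, dc]
      congr 1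
      funext M A B X Y
      simp only [fP, fU, fV, fZ]
      field_simp
      ring
    rw [this, ex_add, ex_add, ex_add, ex_smul, ex_smul, ex_smul, ex_smul]
    ring

lemma recP (β : ℝ) (hβ : 0 < β) (m : ℕ) (i : Tri) (t : ℕ) (ht : 1 ≤ t)
    (hblk : blk m (t+1) ≠ ta i) (hblk' : blk m (t+1) ≠ tb i) :
    ex β m i (t+1) fP = ex β m i t fP * (1 + 2 * (1 / Sn β t)) := by
  have hS := (Sn_pos β hβ t ht).ne'
  obtain ⟨h1, h2, h3⟩ := tri_ne i
  have da : di m (t+1) (ta i) = 0 := di_zero hblk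
  have db : di m (t+1) (tb i) = 0 := di_zero hblk'
  have : ex β m i (t+1) fP = ex β m i t (fun M A B X Y => (1 + 2 * (1 / Sn β t)) * fP M A B X Y) := by
    unfold ex
    rw [ev_step _ _ _ _ _ _ ht h1, da, db]
    congr 1
    funext M A B X Y
    simp only [fP]
    field_simp
    ring
  rw [this, ex_smul]
  ring

lemma recC (β : ℝ) (hβ : 0 < β) (m : ℕ) (i : Tri) (t : ℕ) (ht : 1 ≤ t)
    (hblk : blk m (t+1) = tc i) :
    ex β m i (t+1) fQ = ex β m i t fQ * (1 + 1 / Sn β t) + ex β m i t fP / Sn β t ∧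
    ex β m i (t+1) fR = ex β m i t fR * (1 + 1 / Sn β t) + ex β m i t fP / Sn β t ∧
    ex β m i (t+1) fT = ex β m i t fT + ex β m i t fQ / Sn β t + ex β m i t fR / Sn β t := by
  have hS := (Sn_pos β hβ t ht).ne'
  obtain ⟨h1, h2, h3⟩ := tri_ne i
  have da : di m (t+1) (ta i) = 0 := di_zero (by rw [hblk]; exact h2.symm)
  have db : di m (t+1) (tb i) = 0 := di_zero (by rw [hblk]; exact h3.symm)
  have dc : di m (t+1) (tc i) = 1 := di_one hblk
  refine ⟨?_, ?_, ?_⟩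
  · have : ex β m i (t+1) fQ = ex β m i t (fun M A B X Y => (1 + 1 / Sn β t) * fQ M A B X Y +
        (1 / Sn β t) * fP M A B X Y) := by
      unfold ex
      rw [ev_step _ _ _ _ _ _ ht h1, da, db, dc]
      congr 1
      funext M A B X Y
      simp only [fQ, fP]
      field_simp
      ring
    rw [this, ex_add, ex_smul, ex_smul]
    ring
  · have : ex β m i (t+1) fR = ex β m i t (fun M A B X Y => (1 + 1 / Sn β t) * fR M A B X Y +
        (1 / Sn β t) * fP M A B X Y) := by
      unfold ex
      rw [ev_step _ _ _ _ _ _ ht h1, da, db, dc]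
      congr 1
      funext M A B X Y
      simp only [fR, fP]
      field_simp
      ring
    rw [this, ex_add, ex_smul, ex_smul]
    ring
  · have : ex β m i (t+1) fT = ex β m i t (fun M A B X Y => 1 * fT M A B X Y +
        ((1 / Sn β t) * fQ M A B X Y + (1 / Sn β t) * fR M A B X Y)) := by
      unfold ex
      rw [ev_step _ _ _ _ _ _ ht h1, da, db, dc]
      congr 1
      funext M A B X Y
      simp only [fQ, fR, fT]
      field_simp
      ring
    rw [this, ex_add, ex_add, ex_smul, ex_smul, ex_smul]
    ring

lemma recT (β : ℝ) (hβ : 0 < β) (m : ℕ) (i : Tri) (t : ℕ) (ht : 1 ≤ t)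
    (hblk' : blk m (t+1) ≠ tb i) (hblk : blk m (t+1) ≠ tc i) :
    ex β m i (t+1) fT = ex β m i t fT := by
  have hS := (Sn_pos β hβ t ht).ne'
  obtain ⟨h1, h2, h3⟩ := tri_ne i
  have db : di m (t+1) (tb i) = 0 := di_zero hblk'
  have dc : di m (t+1) (tc i) = 0 := di_zero hblk
  unfold ex
  rw [ev_step _ _ _ _ _ _ ht h1, db, dc]
  congr 1
  funext M A B X Y
  simp only [fT]
  field_simp
  ring

lemma WW_pre (β : ℝ) (m a t : ℕ) (g : ℕ → ℕ) (h : t ≤ (a - 1) * m) : WW β m a t g = 0 := by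
  unfold WW
  rw [Finset.filter_false_of_mem]
  · simp
  · intro i hi
    have := Finset.mem_Icc.mp hi
    exact (blk_lt this.1 (by omega)).ne

lemma MM_pre (m a b t : ℕ) (g : ℕ → ℕ) (h : t ≤ (b - 1) * m) : MM m t b a g = 0 := by
  unfold MM
  rw [Finset.filter_false_of_mem]
  · simp
  · intro i hi
    have := Finset.mem_Icc.mp hi
    have := (blk_lt (by omega : 1 ≤ i) (by omega : i ≤ (b-1) * m)).ne
    tauto

lemma ex_preA (β : ℝ) (m : ℕ) (i : Tri) (t : ℕ) (h : t ≤ (ta i - 1) * m) :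
    ex β m i t fL = 0 ∧ ex β m i t fZ = 0 := by
  constructor <;> refine Eq.trans ?_ (ex_zero β m i t) <;> unfold ex ev <;> apply EE_congr <;>
    intro g _ _ _ <;> simp [fL, fZ, WW_pre β m _ t g h]

lemma ex_preB (β : ℝ) (m : ℕ) (i : Tri) (t : ℕ) (h : t ≤ (tb i - 1) * m) :
    ex β m i t fU = 0 ∧ ex β m i t fV = 0 ∧ ex β m i t fP = 0 := by
  refine ⟨?_, ?_, ?_⟩ <;> refine Eq.trans ?_ (ex_zero β m i t) <;> unfold ex ev <;> apply EE_congr <;>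
    intro g _ _ _ <;> simp [fU, fV, fP, WW_pre β m _ t g h, MM_pre m _ _ t g h]

lemma ex_preC (β : ℝ) (m : ℕ) (i : Tri) (t : ℕ) (h : t ≤ (tc i - 1) * m) :
    ex β m i t fQ = 0 ∧ ex β m i t fR = 0 ∧ ex β m i t fT = 0 := by
  refine ⟨?_, ?_, ?_⟩ <;> refine Eq.trans ?_ (ex_zero β m i t) <;> unfold ex ev <;> apply EE_congr <;>
    intro g _ _ _ <;> simp [fQ, fR, fT, MM_pre m _ _ t g h]

lemma ex_one (β : ℝ) (m : ℕ) (i : Tri) (h : ta i = 1) :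
    ex β m i 1 fL = β ∧ ex β m i 1 fZ = β * (β + 1) := by
  have hW : WW β m 1 1 (fun _ => 0) = β := by
    unfold WW
    have : (Finset.Icc 1 1).filter (fun i => blk m i = 1) = {1} := by
      ext x; simp [blk]; rintro rfl; simp [Nat.eq_zero_or_pos]
    rw [this]
    simp [dg]
  unfold ex ev
  rw [EE_one, EE_one, h]
  simp [fL, fZ, hW]

lemma final_eq (β : ℝ) (m n : ℕ) (i : Tri) :
    moriE (n * m) β (fun f => (mult n m f (ta i) (tb i) : ℝ) * (mult n m f (ta i) (tc i) : ℝ)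
      * (mult n m f (tb i) (tc i) : ℝ)) = ex β m i (n * m) fT := by
  obtain ⟨h1, h2, h3⟩ := i.2
  have key : ∀ (f : ParentSeq (n*m)) (a b : ℕ), a < b → (mult n m f a b : ℝ) = MM m (n*m) b a (pval f) := by
    intro f a b hab
    unfold mult MM
    congr 2
    apply Finset.filter_congr
    intro t ht
    have ht := Finset.mem_Icc.mp ht
    constructor
    · rintro (⟨e1, e2⟩ | h)
      · exfalso
        have := pval_lt f t ht.1
        have : blk m (pval f t) ≤ blk m t := by
          unfold blk
          have := Nat.div_le_div_right (c := m) (by omega : pval f t - 1 ≤ t - 1)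
          omega
        omega
      · exact h
    · exact Or.inr
  unfold ex ev EE moriE
  apply Finset.sum_congr rfl
  intro f _
  simp only [fT]
  rw [key f _ _ h2, key f _ _ (h2.trans h3), key f _ _ h3]

def Lim (u : Tri → ℝ) (l : ℝ) : Prop := ∃ K : ℝ, ∀ i : Tri, |u i - l| ≤ K / (ta i : ℝ)

lemma ta_ge (i : Tri) : (1:ℝ) ≤ (ta i : ℝ) := by exact_mod_cast (tri i).1

lemma Lim.const (l : ℝ) : Lim (fun _ => l) l := ⟨0, fun i => by simp⟩

lemma Lim.add {u v : Tri → ℝ} {l k : ℝ} (hu : Lim u l) (hv : Lim v k) :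
    Lim (fun i => u i + v i) (l + k) := by
  obtain ⟨K, hK⟩ := hu
  obtain ⟨J, hJ⟩ := hv
  refine ⟨K + J, fun i => ?_⟩
  have e : u i + v i - (l + k) = (u i - l) + (v i - k) := by ring
  rw [e, add_div]
  exact (abs_add_le _ _).trans (add_le_add (hK i) (hJ i))

lemma Lim.mul {u v : Tri → ℝ} {l k : ℝ} (hu : Lim u l) (hv : Lim v k) :
    Lim (fun i => u i * v i) (l * k) := by
  obtain ⟨K, hK⟩ := hu
  obtain ⟨J, hJ⟩ := hv
  refine ⟨K * J + |l| * J + K * |k|, fun i => ?_⟩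
  have ha := ta_ge i
  have h1 := hK i
  have h2 := hJ i
  have hK0 : 0 ≤ K / (ta i : ℝ) := (abs_nonneg _).trans h1
  have hJ0 : 0 ≤ J / (ta i : ℝ) := (abs_nonneg _).trans h2
  have hJ1 : 0 ≤ J := by
    have := mul_nonneg hJ0 (by linarith : (0:ℝ) ≤ ta i)
    rwa [div_mul_cancel₀ _ (by linarith : (ta i : ℝ) ≠ 0)] at this
  have hJ2 : J / (ta i : ℝ) ≤ J := div_le_self hJ1 ha
  have e : u i * v i - l * k = (u i - l) * (v i - k) + l * (v i - k) + (u i - l) * k := by ring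
  calc |u i * v i - l * k| ≤ |u i - l| * |v i - k| + |l| * |v i - k| + |u i - l| * |k| := by
        rw [e, ← abs_mul, ← abs_mul, ← abs_mul]
        exact (abs_add_le _ _).trans (add_le_add (abs_add_le _ _) le_rfl)
    _ ≤ (K / ta i) * J + |l| * (J / ta i) + (K / ta i) * |k| := by
        have := abs_nonneg l
        have := abs_nonneg k
        have := abs_nonneg (v i - k)
        gcongr
        linarith
    _ = _ := by ring

lemma Lim.congr {u v : Tri → ℝ} {l k : ℝ} (hu : Lim u l) (h : ∀ i, v i = u i) (hk : k = l) : Lim v k := by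
  have : v = u := funext h
  rw [this, hk]; exact hu

lemma Lim.inv_S {β : ℝ} (hβ : 0 < β) (t : Tri → ℕ) (ht : ∀ i, ta i ≤ t i) :
    Lim (fun i => 1 / Sn β (t i)) 0 := by
  refine ⟨1 / β, fun i => ?_⟩
  have h1 : 1 ≤ t i := (tri i).1.trans (ht i)
  have h2 := Sn_ge β hβ _ h1
  have h3 := Sn_pos β hβ _ h1
  have h4 : (ta i : ℝ) ≤ t i := by exact_mod_cast ht i
  have ha := ta_ge i
  rw [sub_zero, abs_of_pos (by positivity), div_div]
  apply one_div_le_one_div_of_le (by positivity)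
  nlinarith

lemma Lim.S_ratio {β : ℝ} (hβ : 0 < β) (t : Tri → ℕ) (ht : ∀ i, ta i ≤ t i) (j : ℕ) :
    Lim (fun i => Sn β (t i) / Sn β (t i + j)) 1 := by
  have := (Lim.const 1).add ((Lim.const (-((2 + β) * j))).mul
    (Lim.inv_S hβ (fun i => t i + j) (fun i => (ht i).trans (by omega))))
  refine this.congr (fun i => ?_) (by ring)
  have h3 := (Sn_pos β hβ (t i + j) ((tri i).1.trans ((ht i).trans (by omega)))).ne'
  field_simp
  unfold Sn
  push_cast
  ring

def Rel (F b : Tri → ℝ) (l : ℝ) : Prop := ∃ u, Lim u l ∧ ∀ i, F i = b i * u i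

lemma Rel.add {F G b : Tri → ℝ} {l k : ℝ} (hF : Rel F b l) (hG : Rel G b k) :
    Rel (fun i => F i + G i) b (l + k) := by
  obtain ⟨u, hu, hu'⟩ := hF
  obtain ⟨v, hv, hv'⟩ := hG
  exact ⟨_, hu.add hv, fun i => by simp only [hu', hv']; ring⟩

lemma Rel.mul {F b v : Tri → ℝ} {l k : ℝ} (hF : Rel F b l) (hv : Lim v k) :
    Rel (fun i => F i * v i) b (l * k) := by
  obtain ⟨u, hu, hu'⟩ := hF
  exact ⟨_, hu.mul hv, fun i => by simp only [hu']; ring⟩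

lemma Rel.congr {F G b : Tri → ℝ} {l k : ℝ} (hF : Rel F b l) (h : ∀ i, G i = F i) (hk : k = l) :
    Rel G b k := by
  have : G = F := funext h
  rw [this, hk]; exact hF

lemma Rel.div {β : ℝ} (hβ : 0 < β) {F b : Tri → ℝ} {l : ℝ} (t : Tri → ℕ) (ht : ∀ i, ta i ≤ t i) (j : ℕ)
    (hF : Rel F b l) :
    Rel (fun i => F i / Sn β (t i + j)) (fun i => b i / Sn β (t i)) l := by
  obtain ⟨u, hu, hu'⟩ := hF
  refine ⟨_, (hu.mul (Lim.S_ratio hβ t ht j)).congr (fun i => rfl) (by ring), fun i => ?_⟩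
  have h2 := (Sn_pos β hβ (t i) ((tri i).1.trans (ht i))).ne'
  have h3 := (Sn_pos β hβ (t i + j) ((tri i).1.trans ((ht i).trans (by omega)))).ne'
  simp only [hu']
  field_simp

lemma Rel.zero {F b : Tri → ℝ} {l : ℝ} (h : ∀ i, F i = 0) (hl : l = 0) : Rel F b l :=
  ⟨fun _ => 0, by rw [hl]; exact Lim.const 0, fun i => by simp [h]⟩

lemma Rel.self {b : Tri → ℝ} : Rel b b 1 := ⟨fun _ => 1, Lim.const 1, fun i => by simp⟩

lemma tri_mul (m : ℕ) (hm : 1 ≤ m) (i : Tri) : ta i ≤ (ta i - 1) * m + 1 ∧ ta i * m ≤ (tb i - 1) * m ∧ tb i * m ≤ (tc i - 1) * m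
    ∧ ta i ≤ ta i * m ∧ tb i ≤ tb i * m := by
  obtain ⟨h1, h2, h3⟩ := tri i
  refine ⟨?_, Nat.mul_le_mul_right _ (by omega), Nat.mul_le_mul_right _ (by omega),
    Nat.le_mul_of_pos_right _ hm, Nat.le_mul_of_pos_right _ hm⟩
  have := Nat.le_mul_of_pos_right (ta i - 1) hm
  omega

lemma blk_in (m : ℕ) (hm : 1 ≤ m) (a j : ℕ) (ha : 1 ≤ a) (hj : j < m) : blk m ((a - 1) * m + j + 1) = a := by
  apply di_self hm
  · omega
  · obtain ⟨k, rfl⟩ : ∃ k, a = k + 1 := ⟨a - 1, by omega⟩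
    rw [Nat.succ_mul]
    simp; omega

lemma phaseA (β : ℝ) (hβ : 0 < β) (m : ℕ) (hm : 1 ≤ m) (j : ℕ) (hj : 1 ≤ j) : j ≤ m →
    Lim (fun i => ex β m i ((ta i - 1) * m + j) fL) (j * (1 + β)) ∧
    Lim (fun i => ex β m i ((ta i - 1) * m + j) fZ) ((j * (1 + β)) * (j * (1 + β) + 1)) := by
  induction j, hj using Nat.le_induction with
  | base =>
    intro _
    have key : ∀ i, ta i ≠ 1 → ex β m i ((ta i - 1) * m + 1) fL = 1 + β ∧
        ex β m i ((ta i - 1) * m + 1) fZ = (1 + β) * (2 + β) := by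
      intro i hi
      have h1 := (tri i).1
      have h0 : 1 ≤ (ta i - 1) * m := Nat.mul_pos (by omega) hm
      obtain ⟨e1, e2⟩ := recA β hβ m i ((ta i - 1) * m) h0 (blk_in m hm _ 0 h1 (by omega))
      obtain ⟨z1, z2⟩ := ex_preA β m i _ le_rfl
      rw [e1, e2, z1, z2]
      constructor <;> ring
    constructor
    · refine ⟨1, fun i => ?_⟩
      have ha := ta_ge i
      by_cases hi : ta i = 1
      · have := (ex_one β m i hi).1
        simp only [hi, Nat.sub_self, zero_mul, zero_add, this]
        norm_num
      · simp only [(key i hi).1]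
        simp
    · refine ⟨2 * (1 + β), fun i => ?_⟩
      have ha := ta_ge i
      by_cases hi : ta i = 1
      · have := (ex_one β m i hi).2
        simp only [hi, Nat.sub_self, zero_mul, zero_add, this]
        have e : β * (β + 1) - (((1:ℕ):ℝ) * (1 + β)) * (((1:ℕ):ℝ) * (1 + β) + 1) = -(2 * (1 + β)) := by
          push_cast; ring
        rw [e, abs_neg, abs_of_pos (by positivity)]
        simp
      · simp only [(key i hi).2]
        have e : (1 + β) * (2 + β) - (((1:ℕ):ℝ) * (1 + β)) * (((1:ℕ):ℝ) * (1 + β) + 1) = 0 := by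
          push_cast; ring
        rw [e, abs_zero]
        positivity
  | succ j hj ih =>
    intro hjm
    obtain ⟨hL, hZ⟩ := ih (by omega)
    have ht : ∀ i, ta i ≤ (ta i - 1) * m + j := fun i => by have := (tri_mul m hm i).1; omega
    have hS := Lim.inv_S hβ (fun i => (ta i - 1) * m + j) ht
    have hrec := fun i => recA β hβ m i ((ta i - 1) * m + j) ((tri i).1.trans (ht i))
      (blk_in m hm _ j (tri i).1 (by omega))
    constructor
    · refine ((hL.mul ((Lim.const 1).add hS)).add (Lim.const (1 + β))).congr (fun i => ?_) ?_
      · exact (hrec i).1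
      · push_cast; ring
    · refine (((hZ.mul ((Lim.const 1).add ((Lim.const 2).mul hS))).add
        (hL.mul ((Lim.const (2 * (1 + β))).add ((Lim.const (2 * (1 + β))).mul hS)))).add
        (Lim.const ((1 + β) * (2 + β)))).congr (fun i => ?_) ?_
      · exact (hrec i).2
      · push_cast; ring

lemma phaseB (β : ℝ) (hβ : 0 < β) (m : ℕ) (hm : 1 ≤ m) (j : ℕ) : j ≤ m →
    Rel (fun i => ex β m i ((tb i - 1) * m + j) fZ) (fun i => ex β m i ((tb i - 1) * m) fZ) 1 ∧
    Rel (fun i => ex β m i ((tb i - 1) * m + j) fV) (fun i => ex β m i ((tb i - 1) * m) fZ) (j * (1 + β)) ∧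
    Rel (fun i => ex β m i ((tb i - 1) * m + j) fU)
      (fun i => ex β m i ((tb i - 1) * m) fZ / Sn β ((tb i - 1) * m)) j ∧
    Rel (fun i => ex β m i ((tb i - 1) * m + j) fP)
      (fun i => ex β m i ((tb i - 1) * m) fZ / Sn β ((tb i - 1) * m)) ((1 + β) * j ^ 2) := by
  have ht0 : ∀ i, ta i ≤ (tb i - 1) * m := fun i => by
    obtain ⟨_, h1, h2, h3, h4⟩ := tri_mul m hm i
    omega
  induction j with
  | zero =>
    intro _
    have h := fun i => ex_preB β m i _ le_rfl
    refine ⟨Rel.self, Rel.zero (fun i => (h i).2.1) (by simp), Rel.zero (fun i => (h i).1) (by simp),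
      Rel.zero (fun i => (h i).2.2) (by simp)⟩
  | succ j ih =>
    intro hjm
    obtain ⟨hZ, hV, hU, hP⟩ := ih (by omega)
    have ht : ∀ i, ta i ≤ (tb i - 1) * m + j := fun i => by have := ht0 i; omega
    have hS := Lim.inv_S hβ (fun i => (tb i - 1) * m + j) ht
    have hbl := fun i => blk_in m hm (tb i) j (by have := tri i; omega) (by omega : j < m)
    have hrec := fun i => recB β hβ m i ((tb i - 1) * m + j) ((tri i).1.trans (ht i)) (hbl i)
    have hrecZ := fun i => recZ β hβ m i ((tb i - 1) * m + j) ((tri i).1.trans (ht i))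
      (by rw [hbl i]; exact (tri_ne i).1.symm)
    refine ⟨?_, ?_, ?_, ?_⟩
    · refine (hZ.mul ((Lim.const 1).add ((Lim.const 2).mul hS))).congr hrecZ ?_
      ring
    · refine ((hV.mul ((Lim.const 1).add ((Lim.const 3).mul hS))).add
        (hZ.mul ((Lim.const (1 + β)).mul ((Lim.const 1).add ((Lim.const 2).mul hS))))).congr
        (fun i => (hrec i).2.1) ?_
      push_cast; ring
    · refine ((hU.mul ((Lim.const 1).add hS)).add (Rel.div hβ _ ht0 j hZ)).congr (fun i => (hrec i).1) ?_
      push_cast; ring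
    · refine ((((hP.mul ((Lim.const 1).add ((Lim.const 2).mul hS))).add
        (hU.mul ((Lim.const (1 + β)).mul ((Lim.const 1).add hS)))).add
        (Rel.div hβ _ ht0 j hV)).add ((Rel.div hβ _ ht0 j hZ).mul (Lim.const (1 + β)))).congr
        (fun i => (hrec i).2.2) ?_
      push_cast; ring

lemma phaseC (β : ℝ) (hβ : 0 < β) (m : ℕ) (hm : 1 ≤ m) (j : ℕ) : j ≤ m →
    Rel (fun i => ex β m i ((tc i - 1) * m + j) fP) (fun i => ex β m i ((tc i - 1) * m) fP) 1 ∧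
    Rel (fun i => ex β m i ((tc i - 1) * m + j) fQ)
      (fun i => ex β m i ((tc i - 1) * m) fP / Sn β ((tc i - 1) * m)) j ∧
    Rel (fun i => ex β m i ((tc i - 1) * m + j) fR)
      (fun i => ex β m i ((tc i - 1) * m) fP / Sn β ((tc i - 1) * m)) j ∧
    Rel (fun i => ex β m i ((tc i - 1) * m + j) fT)
      (fun i => ex β m i ((tc i - 1) * m) fP / Sn β ((tc i - 1) * m) / Sn β ((tc i - 1) * m))
      (j * (j - 1)) := by
  have ht0 : ∀ i, ta i ≤ (tc i - 1) * m := fun i => by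
    obtain ⟨_, h1, h2, h3, h4⟩ := tri_mul m hm i
    obtain ⟨_, _, _⟩ := tri i
    omega
  induction j with
  | zero =>
    intro _
    have h := fun i => ex_preC β m i _ le_rfl
    refine ⟨Rel.self, Rel.zero (fun i => (h i).1) (by simp), Rel.zero (fun i => (h i).2.1) (by simp),
      Rel.zero (fun i => (h i).2.2) (by simp)⟩
  | succ j ih =>
    intro hjm
    obtain ⟨hP, hQ, hR, hT⟩ := ih (by omega)
    have ht : ∀ i, ta i ≤ (tc i - 1) * m + j := fun i => by have := ht0 i; omega
    have hS := Lim.inv_S hβ (fun i => (tc i - 1) * m + j) ht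
    have hbl := fun i => blk_in m hm (tc i) j (by have := tri i; omega) (by omega : j < m)
    have hrec := fun i => recC β hβ m i ((tc i - 1) * m + j) ((tri i).1.trans (ht i)) (hbl i)
    have hrecP := fun i => recP β hβ m i ((tc i - 1) * m + j) ((tri i).1.trans (ht i))
      (by rw [hbl i]; exact (tri_ne i).2.1.symm) (by rw [hbl i]; exact (tri_ne i).2.2.symm)
    refine ⟨?_, ?_, ?_, ?_⟩
    · refine (hP.mul ((Lim.const 1).add ((Lim.const 2).mul hS))).congr hrecP ?_
      ring
    · refine ((hQ.mul ((Lim.const 1).add hS)).add (Rel.div hβ _ ht0 j hP)).congr (fun i => (hrec i).1) ?_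
      push_cast; ring
    · refine ((hR.mul ((Lim.const 1).add hS)).add (Rel.div hβ _ ht0 j hP)).congr (fun i => (hrec i).2.1) ?_
      push_cast; ring
    · refine ((hT.add (Rel.div hβ _ ht0 j hQ)).add (Rel.div hβ _ ht0 j hR)).congr
        (fun i => (hrec i).2.2) ?_
      push_cast; ring

lemma prod_bound (β : ℝ) (hβ : 0 < β) (F : ℕ → ℝ) (p q : ℕ) (hp : 1 ≤ p) (hpq : p ≤ q) :
    (∀ t, p ≤ t → t < q → F (t+1) = F t * (1 + 2 * (1 / Sn β t))) →
    ∃ r, 1 ≤ r ∧ r ≤ (1 + 2 * (1 / Sn β p)) * (1 - 2 / (2 + β) / q) ∧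
      F q = F p * ((q : ℝ) / p) ^ (2 / (2 + β)) * r := by
  induction q, hpq using Nat.le_induction with
  | base =>
    intro _
    have hp' : (1:ℝ) ≤ p := by exact_mod_cast hp
    refine ⟨1, le_rfl, ?_, ?_⟩
    · have hS := (Sn_pos β hβ p hp)
      have : (1 + 2 * (1 / Sn β p)) * (1 - 2 / (2 + β) / p) = 1 := by
        have : (2 + β) ≠ 0 := by positivity
        have : (p : ℝ) ≠ 0 := by positivity
        field_simp
        unfold Sn
        ring
      rw [this]
    · rw [div_self (by positivity)]
      simp
  | succ q hpq ih =>
    intro h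
    obtain ⟨r, h1, h2, h3⟩ := ih (fun t ht ht' => h t ht (by omega))
    have hp' : (1:ℝ) ≤ p := by exact_mod_cast hp
    have hq1 : 1 ≤ q := hp.trans hpq
    have hq' : (1:ℝ) ≤ q := by exact_mod_cast hq1
    set y : ℝ := 2 / (2 + β) with hy
    have hy0 : 0 < y := by positivity
    have hy1 : y < 1 := by rw [hy, div_lt_one (by positivity)]; linarith
    have hS := Sn_pos β hβ q hq1
    have hSp := Sn_pos β hβ p hp
    have hfac : 1 + 2 * (1 / Sn β q) = q / (q - y) := by
      have hSy : Sn β q = (2 + β) * (q - y) := by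
        rw [hy]; unfold Sn; field_simp
      have hqy : (q:ℝ) - y ≠ 0 := by linarith
      rw [hSy]
      field_simp
      rw [hy]
      field_simp
      ring
    have hqy : 0 < (q:ℝ) - y := by linarith
    set w : ℝ := ((q:ℝ) / (q + 1)) ^ y with hw
    have hw0 : 0 < w := by positivity
    have hwup : w ≤ 1 - y / (q + 1) := by
      have := rpow_one_add_le_one_add_mul_self (s := -(1 / ((q:ℝ) + 1))) (p := y)
        (by rw [neg_le_neg_iff, div_le_one (by positivity)]; linarith) hy0.le hy1.le
      have e : 1 + -(1 / ((q:ℝ) + 1)) = q / (q + 1) := by field_simp; ring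
      rw [e] at this
      calc w ≤ _ := this
        _ = _ := by ring
    have hwinv : w⁻¹ = (((q:ℝ) + 1) / q) ^ y := by
      rw [hw, ← Real.inv_rpow (by positivity), inv_div]
    have hwlow : w⁻¹ ≤ 1 + y / q := by
      have := rpow_one_add_le_one_add_mul_self (s := (1 / (q:ℝ))) (p := y)
        (by have : (0:ℝ) ≤ 1 / q := by positivity
            linarith) hy0.le hy1.le
      have e : 1 + (1 / (q:ℝ)) = (q + 1) / q := by field_simp
      rw [e] at this
      rw [hwinv]
      calc _ ≤ _ := this
        _ = _ := by ring
    refine ⟨r * (q / (q - y) * w), ?_, ?_, ?_⟩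
    · have : 1 ≤ q / (q - y) * w := by
        have h5 : 1 ≤ (1 + y / q) * w := by
          calc (1:ℝ) = w⁻¹ * w := by field_simp
            _ ≤ _ := by gcongr
        have h6 : 1 + y / q ≤ q / (q - y) := by
          rw [le_div_iff₀ hqy]
          have : (1 + y / q) * (q - y) = q - y ^ 2 / q := by field_simp; ring
          rw [this]
          have : 0 ≤ y ^ 2 / q := by positivity
          linarith
        calc 1 ≤ _ := h5
          _ ≤ _ := by gcongr
      nlinarith
    · have h7 : 0 < 1 - y / q := by
        rw [sub_pos, div_lt_one (by positivity)]; linarith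
      have h8 : q / (q - y) * (1 - y / q) = 1 := by
        field_simp
      calc r * (q / (q - y) * w) ≤ ((1 + 2 * (1 / Sn β p)) * (1 - y / q)) * (q / (q - y) * (1 - y / (q + 1))) := by
            gcongr
        _ = (1 + 2 * (1 / Sn β p)) * (1 - y / (q + 1)) * (q / (q - y) * (1 - y / q)) := by ring
        _ = _ := by rw [h8]; push_cast; ring
    · rw [h q hpq (by omega), h3, hfac]
      have e : (((q + 1 : ℕ) : ℝ) / p) ^ y = ((q:ℝ) / p) ^ y * w⁻¹ := by
        rw [hwinv, ← Real.mul_rpow (by positivity) (by positivity)]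
        congr 1
        push_cast
        field_simp
      rw [e]
      field_simp

lemma prodLim (β : ℝ) (hβ : 0 < β) (F : Tri → ℕ → ℝ) (p q : Tri → ℕ) (hp : ∀ i, ta i ≤ p i) (hpq : ∀ i, p i ≤ q i)
    (h : ∀ i t, p i ≤ t → t < q i → F i (t+1) = F i t * (1 + 2 * (1 / Sn β t))) :
    ∃ r, Lim r 1 ∧ ∀ i, F i (q i) = F i (p i) * ((q i : ℝ) / p i) ^ (2 / (2 + β)) * r i := by
  choose r h1 h2 h3 using fun i => prod_bound β hβ (F i) (p i) (q i) ((tri i).1.trans (hp i)) (hpq i) (h i)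
  refine ⟨r, ?_, h3⟩
  obtain ⟨K, hK⟩ := (Lim.const 2).mul (Lim.inv_S hβ p hp)
  refine ⟨K, fun i => le_trans ?_ (hK i)⟩
  have hS := Sn_pos β hβ (p i) ((tri i).1.trans (hp i))
  rw [abs_of_nonneg (by linarith [h1 i]), mul_zero, sub_zero, abs_of_nonneg (by positivity)]
  have h5 : 0 ≤ 2 / (2 + β) / (q i : ℝ) := by positivity
  have h6 : 0 ≤ 2 * (1 / Sn β (p i)) := by positivity
  have := h2 i
  nlinarith

lemma Lim.shift_S {β : ℝ} (hβ : 0 < β) (m : ℕ) (hm : 1 ≤ m) (s : Tri → ℕ) (hs : ∀ i, ta i < s i) :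
    Lim (fun i => (s i : ℝ) / Sn β ((s i - 1) * m)) (1 / ((2 + β) * m)) := by
  have hle : ∀ i, ta i ≤ (s i - 1) * m := fun i => by
    have := Nat.le_mul_of_pos_right (s i - 1) hm
    have := hs i
    omega
  have := (Lim.const (1 / ((2 + β) * m))).add ((Lim.const (((2 + β) * m + 2) / ((2 + β) * m))).mul
    (Lim.inv_S hβ _ hle))
  refine this.congr (fun i => ?_) (by ring)
  have h3 := (Sn_pos β hβ _ ((tri i).1.trans (hle i))).ne'
  have hm' : (m:ℝ) ≠ 0 := by positivity
  have hb : (2 + β) ≠ 0 := by positivity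
  have h1 : 1 ≤ s i := by have := hs i; omega
  field_simp
  unfold Sn
  push_cast [Nat.cast_sub h1]
  ring

lemma Lim.shift_pow {y : ℝ} (hy0 : 0 < y) (hy1 : y < 1) (s : Tri → ℕ) (hs : ∀ i, ta i < s i) :
    Lim (fun i => (((s i - 1 : ℕ) : ℝ) / s i) ^ y) 1 := by
  refine ⟨1, fun i => ?_⟩
  have ha := ta_ge i
  have h1 : 1 ≤ s i := by have := hs i; omega
  have h2 : (ta i : ℝ) ≤ s i := by exact_mod_cast (hs i).le
  have h0 : (0:ℝ) < s i := by linarith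
  have e : ((s i - 1 : ℕ) : ℝ) / s i = 1 - 1 / s i := by
    rw [Nat.cast_sub h1]; field_simp; simp
  beta_reduce
  rw [e]
  have hp : 1 / (s i : ℝ) ≤ 1 := by rw [div_le_one h0]; linarith
  have hp0 : 0 ≤ 1 / (s i : ℝ) := by positivity
  have hu : (1 - 1 / (s i : ℝ)) ^ y ≤ 1 := Real.rpow_le_one (by linarith) (by linarith) hy0.le
  have hl : 1 - 1 / (s i : ℝ) ≤ (1 - 1 / (s i : ℝ)) ^ y :=
    Real.self_le_rpow_of_le_one (by linarith) (by linarith) hy1.le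
  have h3 : 1 / (s i : ℝ) ≤ 1 / ta i := one_div_le_one_div_of_le (by linarith) h2
  rw [abs_le]
  constructor <;> linarith

lemma tauto_eq (β : ℝ) (hβ : 0 < β) (a b c : ℝ) (ha : 0 < a) (hb : 0 < b) (hc : 0 < c) :
    (a ^ 2 * b ^ (2 + β) * c ^ (2 + 2 * β)) ^ (-(1 / (2 + β))) =
      (a ^ (2 / (2 + β)))⁻¹ * b⁻¹ * (c ^ (2 / (2 + β)) / c ^ 2) := by
  have h : (2 + β) ≠ 0 := by positivity
  rw [Real.mul_rpow (by positivity) (by positivity), Real.mul_rpow (by positivity) (by positivity),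
    ← Real.rpow_mul hb.le, ← Real.rpow_mul hc.le, ← Real.rpow_natCast a 2, ← Real.rpow_mul ha.le,
    ← Real.rpow_natCast c 2, ← Real.rpow_sub hc, ← Real.rpow_neg ha.le, ← Real.rpow_neg_one b]
  congr 2
  · congr 1
    push_cast
    field_simp
  · congr 1
    field_simp
  · push_cast
    field_simp
    ring

lemma main_rel (β : ℝ) (hβ : 0 < β) (m : ℕ) (hm : 1 ≤ m) :
    Rel (fun i => ex β m i (tc i * m) fT)
      (fun i => ((ta i : ℝ) ^ 2 * (tb i : ℝ) ^ (2 + β) * (tc i : ℝ) ^ (2 + 2 * β)) ^ (-(1 / (2 + β))))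
      ((m : ℝ) * ((m : ℝ) - 1) * (1 + β) ^ 2 / (2 + β) ^ 2
              + (m : ℝ) * ((m : ℝ) - 1) ^ 2 * (1 + β) ^ 3 / (2 + β) ^ 3) := by
  have hmm : ∀ a, 1 ≤ a → (a - 1) * m + m = a * m := by
    intro a ha
    obtain ⟨k, rfl⟩ : ∃ k, a = k + 1 := ⟨a - 1, by omega⟩
    rw [Nat.succ_mul]; rfl
  have hma : ∀ i, (ta i - 1) * m + m = ta i * m := fun i => hmm _ (tri i).1
  have hmb : ∀ i, (tb i - 1) * m + m = tb i * m := fun i => hmm _ (by have := tri i; omega)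
  have hmc : ∀ i, (tc i - 1) * m + m = tc i * m := fun i => hmm _ (by have := tri i; omega)
  have hA := (phaseA β hβ m hm m hm le_rfl).2
  obtain ⟨u2, hu2, eu2⟩ := (phaseB β hβ m hm m le_rfl).2.2.2
  obtain ⟨u1, hu1, eu1⟩ := (phaseC β hβ m hm m le_rfl).2.2.2
  simp only [hma] at hA
  simp only [hmb] at eu2
  simp only [hmc] at eu1
  obtain ⟨r2, hr2, er2⟩ := prodLim β hβ (fun i t => ex β m i t fZ) (fun i => ta i * m) (fun i => (tb i - 1) * m)
    (fun i => (tri_mul m hm i).2.2.2.1) (fun i => (tri_mul m hm i).2.1) (by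
      intro i t h1 h2
      obtain ⟨_, _, _, h3, _⟩ := tri_mul m hm i
      have := (tri i).1
      exact recZ β hβ m i t (by omega) (blk_gt hm h1).ne')
  obtain ⟨r1, hr1, er1⟩ := prodLim β hβ (fun i t => ex β m i t fP) (fun i => tb i * m) (fun i => (tc i - 1) * m)
    (fun i => (tri i).2.1.le.trans (tri_mul m hm i).2.2.2.2) (fun i => (tri_mul m hm i).2.2.1) (by
      intro i t h1 h2
      obtain ⟨_, _, _, _, h3⟩ := tri_mul m hm i
      obtain ⟨_, _, _⟩ := tri i
      have := blk_gt hm h1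
      exact recP β hβ m i t (by omega) (by omega) (by omega))
  have hy0 : 0 < 2 / (2 + β) := by positivity
  have hy1 : 2 / (2 + β) < 1 := by rw [div_lt_one (by positivity)]; linarith
  have hsb : ∀ i, ta i < tb i := fun i => (tri i).2.1
  have hsc : ∀ i, ta i < tc i := fun i => (tri i).2.1.trans (tri i).2.2
  have hL := ((((((((hA.mul hr2).mul hu2).mul hr1).mul hu1).mul (Lim.shift_S hβ m hm tb hsb)).mul
    ((Lim.shift_S hβ m hm tc hsc).mul (Lim.shift_S hβ m hm tc hsc))).mul
    (Lim.shift_pow hy0 hy1 tb hsb)).mul (Lim.shift_pow hy0 hy1 tc hsc))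
  have hm' : (m:ℝ) ≠ 0 := by positivity
  refine ⟨_, hL.congr (fun i => rfl) ?_, ?_⟩
  · field_simp
    ring
  · intro i
    have ha : (0:ℝ) < ta i := by have := ta_ge i; linarith
    have hb : (0:ℝ) < tb i := by have := tri i; exact_mod_cast (by omega : 0 < tb i)
    have hc : (0:ℝ) < tc i := by have := tri i; exact_mod_cast (by omega : 0 < tc i)
    have hb' : (0:ℝ) < (tb i - 1 : ℕ) := by have := tri i; exact_mod_cast (by omega : 0 < tb i - 1)
    have hc' : (0:ℝ) < (tc i - 1 : ℕ) := by have := tri i; exact_mod_cast (by omega : 0 < tc i - 1)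
    obtain ⟨_, h1, h2, h3, h4⟩ := tri_mul m hm i
    obtain ⟨_, _, _⟩ := tri i
    have hSb := (Sn_pos β hβ ((tb i - 1) * m) (by omega)).ne'
    have hSc := (Sn_pos β hβ ((tc i - 1) * m) (by omega)).ne'
    have e1 := er1 i
    have e2 := er2 i
    beta_reduce at e1 e2 ⊢
    rw [eu1, e1, eu2, e2, tauto_eq β hβ _ _ _ ha hb hc]
    have f1 : (((((tb i - 1) * m : ℕ)) : ℝ) / ((ta i * m : ℕ) : ℝ)) ^ (2 / (2 + β)) =
        ((tb i - 1 : ℕ) : ℝ) ^ (2 / (2 + β)) / (ta i : ℝ) ^ (2 / (2 + β)) := by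
      rw [← Real.div_rpow hb'.le ha.le, Nat.cast_mul, Nat.cast_mul, mul_div_mul_right _ _ hm']
    have f2 : (((((tc i - 1) * m : ℕ)) : ℝ) / ((tb i * m : ℕ) : ℝ)) ^ (2 / (2 + β)) =
        ((tc i - 1 : ℕ) : ℝ) ^ (2 / (2 + β)) / (tb i : ℝ) ^ (2 / (2 + β)) := by
      rw [← Real.div_rpow hc'.le hb.le, Nat.cast_mul, Nat.cast_mul, mul_div_mul_right _ _ hm']
    rw [f1, f2, Real.div_rpow hb'.le hb.le, Real.div_rpow hc'.le hc.le]
    have p1 := (Real.rpow_pos_of_pos ha (2 / (2 + β))).ne'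
    have p2 := (Real.rpow_pos_of_pos hb (2 / (2 + β))).ne'
    have p3 := (Real.rpow_pos_of_pos hc (2 / (2 + β))).ne'
    generalize (ta i : ℝ) ^ (2 / (2 + β)) = A at *
    generalize (tb i : ℝ) ^ (2 / (2 + β)) = B at *
    generalize (tc i : ℝ) ^ (2 / (2 + β)) = C at *
    generalize ((tb i - 1 : ℕ) : ℝ) ^ (2 / (2 + β)) = B' at *
    generalize ((tc i - 1 : ℕ) : ℝ) ^ (2 / (2 + β)) = C' at *
    field_simp

lemma T_const (β : ℝ) (hβ : 0 < β) (m n : ℕ) (hm : 1 ≤ m) (i : Tri) (hn : tc i ≤ n) :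
    ex β m i (n * m) fT = ex β m i (tc i * m) fT := by
  have hle : tc i * m ≤ n * m := Nat.mul_le_mul_right _ hn
  generalize n * m = q at *
  induction q, hle using Nat.le_induction with
  | base => rfl
  | succ q hq ih =>
    obtain ⟨_, _, _⟩ := tri i
    have := Nat.le_mul_of_pos_right (tc i) hm
    have := blk_gt hm hq
    rw [recT β hβ m i q (by omega) (by omega) (by omega), ih]

lemma T_m_one (β : ℝ) (hβ : 0 < β) (i : Tri) : ex β 1 i (tc i * 1) fT = 0 := by
  obtain ⟨_, _, _⟩ := tri i
  have h := ex_preC β 1 i ((tc i - 1) * 1) le_rfl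
  have e := (recC β hβ 1 i ((tc i - 1) * 1) (by omega) (blk_in 1 le_rfl (tc i) 0 (by omega) (by omega))).2.2
  rw [h.1, h.2.1, h.2.2] at e
  have : tc i * 1 = (tc i - 1) * 1 + 1 := by omega
  rw [this, e]
  simp

end MT

/-- Expected number of triangles of `G^n_{m,β}` on `u_a, u_b, u_c` (equation (4.3)). -/
theorem expected_triangles_on_triple (β : ℝ) (hβ : 0 < β) (m : ℕ) (hm : 1 ≤ m) :
    ∃ K : ℝ, 0 < K ∧ ∀ n : ℕ, 1 ≤ n → ∀ a b c : ℕ, 1 ≤ a → a < b → b < c → c ≤ n →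
      ∃ θ : ℝ, |θ| ≤ K / (a : ℝ) ∧
        moriE (n * m) β
            (fun f => (mult n m f a b : ℝ) * (mult n m f a c : ℝ) * (mult n m f b c : ℝ)) =
          ((m : ℝ) * ((m : ℝ) - 1) * (1 + β) ^ 2 / (2 + β) ^ 2
              + (m : ℝ) * ((m : ℝ) - 1) ^ 2 * (1 + β) ^ 3 / (2 + β) ^ 3)
            * ((a : ℝ) ^ 2 * (b : ℝ) ^ (2 + β) * (c : ℝ) ^ (2 + 2 * β)) ^ (-(1 / (2 + β)))
            * (1 + θ) := by

  obtain ⟨u, ⟨K, hK⟩, hu⟩ := MT.main_rel β hβ m hm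
  set C : ℝ := ((m : ℝ) * ((m : ℝ) - 1) * (1 + β) ^ 2 / (2 + β) ^ 2
              + (m : ℝ) * ((m : ℝ) - 1) ^ 2 * (1 + β) ^ 3 / (2 + β) ^ 3) with hC
  by_cases h1 : m = 1
  · refine ⟨1, one_pos, ?_⟩
    intro n hn a b c ha hab hbc hcn
    refine ⟨0, by simp, ?_⟩
    let i : MT.Tri := ⟨(a, b, c), ha, hab, hbc⟩
    have hfin := MT.final_eq β m n i
    rw [MT.T_const β hβ m n hm i hcn] at hfin
    refine hfin.trans ?_
    subst h1
    rw [MT.T_m_one β hβ i]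
    have : C = 0 := by rw [hC]; simp
    rw [this]; simp
  · have hm2 : (2:ℝ) ≤ m := by exact_mod_cast (by omega : 2 ≤ m)
    have hC0 : 0 < C := by
      have : 0 < (m:ℝ) - 1 := by linarith
      rw [hC]; positivity
    refine ⟨|K| / C + 1, by positivity, ?_⟩
    intro n hn a b c ha hab hbc hcn
    let i : MT.Tri := ⟨(a, b, c), ha, hab, hbc⟩
    have ha' : (0:ℝ) < a := by exact_mod_cast ha
    refine ⟨u i / C - 1, ?_, ?_⟩
    · have h2 : |u i - C| ≤ K / a := hK i
      have e : u i / C - 1 = (u i - C) / C := by field_simp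
      rw [e, abs_div, abs_of_pos hC0, div_le_iff₀ hC0]
      have h3 : K / a ≤ |K| / a := by gcongr; exact le_abs_self K
      have h4 : (|K| / C + 1) / a * C = |K| / a + C / a := by field_simp
      have h5 : 0 < C / a := by positivity
      rw [h4]; linarith
    · have hfin := MT.final_eq β m n i
      rw [MT.T_const β hβ m n hm i hcn] at hfin
      refine hfin.trans ?_
      have h6 := hu i
      simp only at h6
      rw [h6]
      have h7 : 1 + (u i / C - 1) = u i / C := by ring
      rw [h7]
      field_simp
      simp only [i, MT.ta, MT.tb, MT.tc]
      ring
end
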